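/- For every f ∈ 𝒮 with logarithmic coefficients γ_n, the Roth inequality ∑_{n=1}^∞ (n²/(n+1)²) |γ_n|² ≤ π²/6 − 1 holds; the inequality is strict unless f(z) = z/(1−e^{iθ}z)² for some θ ∈ ℝ. -/

import Mathlib

/-!
The proof is a discrete version of Löwner's parametric method combined with a Milin-type weighted
energy whose weights are adapted to `k² / (k + 1)²`.

**The chain.** After rescaling, `w₀ z = f (r z) / M` is univalent, bounded by one and fixes `0`. As
long as the image of a bounded univalent `w` misses a point of modulus `ω²`, the square-root
transform factors `w` through the map `z ↦ z (a - κ z) / (1 - a κ z)`, `a = 2ω / (1 + ω²) = 1 - h`,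
up to a rotation (`koebe_step`). Iterating, `w₀ = (1 - h)ⁿ · w · exp (2 C (w))` near the origin; one
step changes the Taylor coefficients `c_k` of `C` by `-h e_k + O(h²)`, where `e_k` is the
coefficient of `z^k` in `(1 + κ z) (z C' + 1/2) / (1 - κ z) - 1/2` (`func_step`). The chain stops
when `|w'(0)| ≥ ω²` (`chain_end`), and then `w` is close to a rotation (`near_id`), so the `c_k` are
close to the logarithmic coefficients of `w₀`, up to a rotation.

**The energy.** The weights `τ_k(t) = ∫₀¹ w(t, y)^k (1 + log y) dy`, with `w` the solution of
`w / (1 - w)² = e^{-t} y / (1 - y)²`, satisfy `τ_k(0) = k / (k + 1)²`, `τ_k' = k σ_k` and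
`τ_k - τ_{k+1} = -(σ_k + σ_{k+1})`. These relations make the first variation of
`∑ τ_k (k |c_k|² - 1/k)` along the chain telescope (`energy_identity`). Since `σ_k < 0`
(`sig_le`, `sig_neg`), which comes down to the positivity of one explicit integral (`I0_pos`), the
energy decreases, with the strict gain `∑ (-σ_k) |e_k|²`, up to a truncation error that vanishes as
the number of coefficients grows. The `e_k` control `|K c_K - c_1^K|` (`Q_bound`), so the
gain absorbs a penalty `η |K c_K - c_1^K|²` with `η > 0` depending only on `K` (`Phi_step`).

**Conclusion.** As `h → 0` (`main_bound`), the number of coefficients tends to infinity and `r → 1`,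
one obtains for every `K ≥ 1` (`strong_bound`)
`∑ k² / (k + 1)² |γ_k|² + η |K γ_K - γ_1^K|² ≤ ∑ 1 / (k + 1)² = π² / 6 - 1`.
Equality in Roth's inequality therefore forces `K γ_K = γ_1^K` for all `K`; comparing the two sums
gives `|γ_1| = 1`, and `f` is a rotation of the Koebe function (`koebe_of_coeffs`).
-/

open Complex Metric Real

/-- The class `𝒮` of normalized univalent (analytic and injective) functions
on the unit disk. -/
def InClassS (f : ℂ → ℂ) : Prop :=
  AnalyticOnNhd ℂ f (ball (0 : ℂ) 1) ∧ Set.InjOn f (ball (0 : ℂ) 1) ∧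
    f 0 = 0 ∧ deriv f 0 = 1

/-- `γ` are the logarithmic coefficients of `f`: there is an analytic branch `g`
of `log (f z / z)` on the unit disk with `g 0 = 0` whose Taylor coefficients at `0`
are `2 * γ n` for `n ≥ 1`. -/
def IsLogCoeffs (f : ℂ → ℂ) (γ : ℕ → ℂ) : Prop :=
  ∃ g : ℂ → ℂ, AnalyticOnNhd ℂ g (ball (0 : ℂ) 1) ∧ g 0 = 0 ∧
    (∀ z ∈ ball (0 : ℂ) 1, z ≠ 0 → Complex.exp (g z) = f z / z) ∧
    ∀ n : ℕ, 1 ≤ n → iteratedDeriv n g 0 = (n.factorial : ℂ) * (2 * γ n)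

/-- `f` coincides on the unit disk with a rotation `z / (1 - e^{iθ} z)^2`
of the Koebe function. -/
def IsKoebeRotation (f : ℂ → ℂ) : Prop :=
  ∃ θ : ℝ, Set.EqOn f
    (fun z => z / (1 - Complex.exp (θ * Complex.I) * z) ^ 2) (ball (0 : ℂ) 1)

namespace Roth

/-! ### Univalent functions: inverses and omitted values -/

section
open Filter Topology Set

lemma nhds_le_map_of_inj {w : ℂ → ℂ} (hd : DifferentiableOn ℂ w (ball 0 1))
    (hi : InjOn w (ball 0 1)) {z : ℂ} (hz : z ∈ ball (0:ℂ) 1) :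
    (∀ᶠ x in 𝓝[≠] z, deriv w x ≠ 0) ∧ 𝓝 (w z) ≤ map w (𝓝 z) := by
  have hA : AnalyticOnNhd ℂ w (ball 0 1) := hd.analyticOnNhd isOpen_ball
  have hnc : ¬ ∀ᶠ x in 𝓝 z, w x = w z := by
    intro h
    have h2 : ∀ᶠ x in 𝓝 z, x = z := by
      filter_upwards [h, isOpen_ball.mem_nhds hz] with x hx hxb
      exact hi hxb hz hx
    have h3 : ∀ᶠ x in 𝓝[≠] z, False := by
      filter_upwards [h2.filter_mono nhdsWithin_le_nhds, self_mem_nhdsWithin] with x hx hx'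
      exact hx' hx
    rw [eventually_false_iff_eq_bot] at h3
    exact (NormedField.nhdsNE_neBot z).ne h3
  refine ⟨?_, ?_⟩
  · rcases ((hA z hz).deriv).eventually_eq_zero_or_eventually_ne_zero with h | h
    · exfalso
      apply hnc
      obtain ⟨ε, hε, hsub⟩ := Metric.eventually_nhds_iff_ball.1 (h.and (isOpen_ball.mem_nhds hz))
      filter_upwards [ball_mem_nhds z hε] with x hx
      refine (convex_ball z ε).is_const_of_fderivWithin_eq_zero (𝕜 := ℂ) (f := w)
        (fun y hy => (hA y (hsub y hy).2).differentiableAt.differentiableWithinAt) ?_ hx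
        (mem_ball_self hε)
      intro y hy
      rw [fderivWithin_of_isOpen isOpen_ball hy]
      ext
      simpa using (hsub y hy).1
    · exact h
  · rcases (hA z hz).eventually_constant_or_nhds_le_map_nhds with h | h
    · exact absurd h hnc
    · exact h

/-- A univalent function has a holomorphic local inverse at each point of its image, all of them
restrictions of one function `u`. -/
lemma univ_inv {w : ℂ → ℂ} (hd : DifferentiableOn ℂ w (ball 0 1))
    (hi : InjOn w (ball 0 1)) : ∃ u : ℂ → ℂ, (∀ z ∈ ball (0:ℂ) 1, u (w z) = z) ∧
      (∀ z ∈ ball (0:ℂ) 1, DifferentiableAt ℂ u (w z) ∧ deriv w z * deriv u (w z) = 1 ∧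
        ∀ᶠ y in 𝓝 (w z), u y ∈ ball (0:ℂ) 1 ∧ w (u y) = y) := by
  have hu : ∀ z ∈ ball (0:ℂ) 1, Function.invFunOn w (ball 0 1) (w z) = z :=
    fun z hz => hi.leftInvOn_invFunOn hz
  set u := Function.invFunOn w (ball 0 1) with hudef
  refine ⟨u, hu, ?_⟩
  have hev : ∀ z ∈ ball (0:ℂ) 1, ∀ᶠ y in 𝓝 (w z), u y ∈ ball (0:ℂ) 1 ∧ w (u y) = y := by
    intro z hz
    apply (nhds_le_map_of_inj hd hi hz).2
    rw [Filter.mem_map]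
    filter_upwards [isOpen_ball.mem_nhds hz] with x hx
    simp only [mem_ofPred_eq, mem_preimage]
    rw [hu x hx]; exact ⟨hx, rfl⟩
  have hcont : ∀ z ∈ ball (0:ℂ) 1, ContinuousAt u (w z) := by
    intro z hz
    have : Tendsto u (map w (𝓝 z)) (𝓝 z) := by
      rw [tendsto_map'_iff]
      refine tendsto_id.congr' ?_
      filter_upwards [isOpen_ball.mem_nhds hz] with x hx
      simp [hu x hx]
    rw [ContinuousAt, hu z hz]
    exact this.mono_left (nhds_le_map_of_inj hd hi hz).2
  have hdiff : ∀ z ∈ ball (0:ℂ) 1, DifferentiableAt ℂ u (w z) := by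
    intro z hz
    refine (Complex.analyticAt_of_differentiable_on_punctured_nhds_of_continuousAt ?_ (hcont z hz)).differentiableAt
    have h1 : ∀ᶠ x in 𝓝 z, x ≠ z → deriv w x ≠ 0 :=
      eventually_nhdsWithin_iff.1 (nhds_le_map_of_inj hd hi hz).1
    have h2 : ∀ᶠ y in 𝓝 (w z), u y ≠ z → deriv w (u y) ≠ 0 := by
      have := hcont z hz
      rw [ContinuousAt, hu z hz] at this
      exact this.eventually h1
    rw [eventually_nhdsWithin_iff]
    filter_upwards [h2, hev z hz] with y hy hy' hne
    have hne' : u y ≠ z := by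
      intro h; apply hne; rw [mem_singleton_iff, ← hy'.2, h]
    have hdw : HasDerivAt w (deriv w (u y)) (u y) :=
      (hd.differentiableAt (isOpen_ball.mem_nhds hy'.1)).hasDerivAt
    have hcy : ContinuousAt u y := by have := hcont _ hy'.1; rwa [hy'.2] at this
    have hevy : ∀ᶠ y' in 𝓝 y, w (u y') = y' := by
      have := hev _ hy'.1; rw [hy'.2] at this
      exact this.mono fun _ h => h.2
    exact (HasDerivAt.of_local_left_inverse hcy hdw (hy hne') hevy).differentiableAt
  intro z hz
  refine ⟨hdiff z hz, ?_, hev z hz⟩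
  have hdw : HasDerivAt w (deriv w z) z :=
      (hd.differentiableAt (isOpen_ball.mem_nhds hz)).hasDerivAt
  have hc := (hdiff z hz).hasDerivAt.comp z hdw
  have hid : HasDerivAt (u ∘ w) 1 z := by
    refine (hasDerivAt_id z).congr_of_eventuallyEq ?_
    filter_upwards [isOpen_ball.mem_nhds hz] with x hx
    simp [hu x hx]
  rw [mul_comm]; exact hc.unique hid

/-- If the image misses a point of the disk of radius `β`, it misses a point of the bounding circle.
Otherwise a primitive of `w' / (w - b₀)`, transported by the inverse of `w`, would be a primitive of
`1 / (ζ - b₀)` along the circle, contradicting the residue `2πi`. -/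
lemma omit_on_circle {w : ℂ → ℂ} (hd : DifferentiableOn ℂ w (ball 0 1))
    (hi : InjOn w (ball 0 1)) {β : ℝ} (hβ : 0 < β) {b₀ : ℂ} (hb₀ : ‖b₀‖ ≤ β)
    (hom : ∀ z ∈ ball (0:ℂ) 1, w z ≠ b₀) :
    ∃ b : ℂ, ‖b‖ = β ∧ ∀ z ∈ ball (0:ℂ) 1, w z ≠ b := by
  rcases hb₀.eq_or_lt with h | hlt
  · exact ⟨b₀, h, hom⟩
  by_contra hcon
  push Not at hcon
  obtain ⟨u, hu, hu'⟩ := univ_inv hd hi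
  have hdd : DifferentiableOn ℂ (fun z => deriv w z / (w z - b₀)) (ball 0 1) := by
    refine (hd.deriv isOpen_ball).div (hd.sub_const _) fun z hz => sub_ne_zero.2 (hom z hz)
  obtain ⟨L, hL⟩ := hdd.isExactOn_ball
  have key : ∀ ζ ∈ sphere (0:ℂ) β, HasDerivWithinAt (L ∘ u) ((ζ - b₀)⁻¹) (sphere 0 β) ζ := by
    intro ζ hζ
    obtain ⟨z, hz, rfl⟩ := hcon ζ (by simpa using hζ)
    obtain ⟨h1, h2, -⟩ := hu' z hz
    have h3 : HasDerivAt L (deriv w z / (w z - b₀)) (u (w z)) := by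
      rw [hu z hz]; exact hL z hz
    have h4 := h3.comp (w z) h1.hasDerivAt
    refine HasDerivAt.hasDerivWithinAt ?_
    rwa [div_mul_eq_mul_div, h2, one_div] at h4
  have h0 := circleIntegral.integral_eq_zero_of_hasDerivWithinAt hβ.le key
  rw [circleIntegral.integral_sub_inv_of_mem_ball (by simpa using hlt)] at h0
  simp [Real.pi_ne_zero, Complex.I_ne_zero] at h0

/-- The Schwarz lemma applied to the inverse of `w` on the disk of radius `β`. -/
lemma deriv_ge_of_cover {w : ℂ → ℂ} (hd : DifferentiableOn ℂ w (ball 0 1))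
    (hi : InjOn w (ball 0 1)) (h0 : w 0 = 0) {β : ℝ} (hβ : 0 < β)
    (hcov : ∀ b : ℂ, ‖b‖ ≤ β → ∃ z ∈ ball (0:ℂ) 1, w z = b) : β ≤ ‖deriv w 0‖ := by
  obtain ⟨u, hu, hu'⟩ := univ_inv hd hi
  have hud : DifferentiableOn ℂ u (ball 0 β) := by
    intro y hy
    obtain ⟨z, hz, rfl⟩ := hcov y (by simpa using (mem_ball_zero_iff.1 hy).le)
    exact (hu' z hz).1.differentiableWithinAt
  have hmaps : MapsTo u (ball 0 β) (ball (u 0) 1) := by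
    intro y hy
    obtain ⟨z, hz, rfl⟩ := hcov y (by simpa using (mem_ball_zero_iff.1 hy).le)
    have : u 0 = 0 := by have := hu 0 (by simp); rwa [h0] at this
    rw [hu z hz, this]; exact hz
  have h1 := Complex.norm_deriv_le_div_of_mapsTo_ball hud (hmaps.mono_right ball_subset_closedBall) hβ
  have h2 := (hu' 0 (by simp)).2.1
  rw [h0] at h2
  have h3 : ‖deriv w 0‖ * ‖deriv u 0‖ = 1 := by rw [← norm_mul, h2, norm_one]
  have h4 : 0 ≤ ‖deriv w 0‖ := norm_nonneg _
  have h5 : ‖deriv w 0‖ * ‖deriv u 0‖ ≤ ‖deriv w 0‖ * (1/β) := mul_le_mul_of_nonneg_left h1 h4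
  rw [h3, mul_one_div, le_div_iff₀ hβ] at h5
  linarith

end

/-! ### The square-root transform -/

section
open Filter Topology Set ComplexConjugate

lemma exists_log {G : ℂ → ℂ} (hd : DifferentiableOn ℂ G (ball 0 1))
    (h0 : ∀ z ∈ ball (0:ℂ) 1, G z ≠ 0) :
    ∃ L : ℂ → ℂ, DifferentiableOn ℂ L (ball 0 1) ∧ ∀ z ∈ ball (0:ℂ) 1, Complex.exp (L z) = G z := by
  have hdd : DifferentiableOn ℂ (fun z => deriv G z / G z) (ball 0 1) :=
    (hd.deriv isOpen_ball).div hd h0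
  obtain ⟨L, hL⟩ := hdd.isExactOn_ball
  have hG : ∀ z ∈ ball (0:ℂ) 1, HasDerivAt G (deriv G z) z := fun z hz =>
    (hd.differentiableAt (isOpen_ball.mem_nhds hz)).hasDerivAt
  have hF : ∀ z ∈ ball (0:ℂ) 1, HasDerivAt (fun z => G z * Complex.exp (-L z)) 0 z := by
    intro z hz
    have h := (hG z hz).mul ((hL z hz).neg.cexp)
    refine h.congr_deriv ?_
    have := h0 z hz
    field_simp
    ring
  have hconst : ∀ z ∈ ball (0:ℂ) 1, G z * Complex.exp (-L z) = G 0 * Complex.exp (-L 0) := by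
    intro z hz
    refine (convex_ball (0:ℂ) 1).is_const_of_fderivWithin_eq_zero (𝕜 := ℂ)
        (f := fun z => G z * Complex.exp (-L z))
        (fun y hy => (hF y hy).differentiableAt.differentiableWithinAt) ?_ hz (by simp)
    intro y hy
    rw [fderivWithin_of_isOpen isOpen_ball hy]
    ext
    simpa using (hF y hy).deriv
  have h00 := h0 0 (by simp)
  refine ⟨fun z => L z - L 0 + Complex.log (G 0), ?_, ?_⟩
  · exact fun z hz => (((hL z hz).differentiableAt.sub_const _).add_const _).differentiableWithinAt
  · intro z hz
    have := hconst z hz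
    rw [Complex.exp_add, Complex.exp_log h00, sub_eq_add_neg, Complex.exp_add, mul_assoc,
      mul_comm (Complex.exp (-L 0)), ← this, mul_comm, mul_assoc, ← Complex.exp_add]
    simp

lemma moebius_lt {v d : ℂ} (hv : ‖v‖ < 1) (hd : ‖d‖ < 1) : ‖v - d‖ < ‖1 - conj d * v‖ := by
  have hv2 : v.re ^ 2 + v.im ^ 2 < 1 := by
    have := Complex.sq_norm v
    rw [Complex.normSq_apply] at this; nlinarith [norm_nonneg v]
  have hd2 : d.re ^ 2 + d.im ^ 2 < 1 := by
    have := Complex.sq_norm d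
    rw [Complex.normSq_apply] at this; nlinarith [norm_nonneg d]
  apply lt_of_pow_lt_pow_left₀ 2 (norm_nonneg _)
  rw [Complex.sq_norm, Complex.sq_norm, Complex.normSq_apply, Complex.normSq_apply]
  simp
  nlinarith [mul_pos (sub_pos.2 hv2) (sub_pos.2 hd2)]

lemma moebius_ne {v d : ℂ} (hv : ‖v‖ < 1) (hd : ‖d‖ < 1) : 1 - conj d * v ≠ 0 := by
  intro h
  have := moebius_lt hv hd
  rw [h, norm_zero] at this
  exact absurd this (not_lt.2 (norm_nonneg _))

/-- The bounded Koebe-type map `z ↦ z (a - κ z) / (1 - a κ z)`. -/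
noncomputable def koebeF (a : ℝ) (κ z : ℂ) : ℂ := z * (a - κ * z) / (1 - a * κ * z)

/-- The square-root transform. Moving the omitted value `b` to `0` by a Möbius map, taking a square root
and moving the image of `0` back to `0` gives a bounded univalent `v` with `w = l · koebeF ∘ v`. -/
lemma koebe_step {w : ℂ → ℂ} (hd : DifferentiableOn ℂ w (ball 0 1))
    (hi : InjOn w (ball 0 1)) (hm : MapsTo w (ball 0 1) (ball 0 1)) (h0 : w 0 = 0)
    {ω : ℝ} (hω : 0 < ω) (hω1 : ω < 1) {b : ℂ} (hb : ‖b‖ = ω ^ 2)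
    (hom : ∀ z ∈ ball (0:ℂ) 1, w z ≠ b) :
    ∃ (l κ : ℂ) (v : ℂ → ℂ), ‖l‖ = 1 ∧ ‖κ‖ = 1 ∧ DifferentiableOn ℂ v (ball 0 1) ∧
      InjOn v (ball 0 1) ∧ MapsTo v (ball 0 1) (ball 0 1) ∧ v 0 = 0 ∧
      ∀ z ∈ ball (0:ℂ) 1, w z = l * koebeF (2 * ω / (1 + ω ^ 2)) κ (v z) := by
  have hb1 : ‖b‖ < 1 := by rw [hb]; nlinarith
  have hw1 : ∀ z ∈ ball (0:ℂ) 1, ‖w z‖ < 1 := fun z hz => by simpa using hm hz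
  have hGd : DifferentiableOn ℂ (fun z => (w z - b) / (1 - conj b * w z)) (ball 0 1) :=
    (hd.sub_const _).div ((hd.const_mul _).const_sub _) fun z hz => moebius_ne (hw1 z hz) hb1
  obtain ⟨L, hLd, hL⟩ := exists_log hGd fun z hz =>
    div_ne_zero (sub_ne_zero.2 (hom z hz)) (moebius_ne (hw1 z hz) hb1)
  set v : ℂ → ℂ := fun z => Complex.exp (L z / 2) with hv
  have hv2 : ∀ z ∈ ball (0:ℂ) 1, v z ^ 2 = (w z - b) / (1 - conj b * w z) := by
    intro z hz
    rw [← hL z hz, hv, ← Complex.exp_nat_mul]; congr 1; push_cast; ring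
  have hvd : DifferentiableOn ℂ v (ball 0 1) := (hLd.div_const 2).cexp
  have hv1 : ∀ z ∈ ball (0:ℂ) 1, ‖v z‖ < 1 := by
    intro z hz
    have h := moebius_lt (hw1 z hz) hb1
    have h2 : ‖v z‖ ^ 2 < 1 := by
      rw [← norm_pow, hv2 z hz, norm_div, div_lt_one (lt_of_le_of_lt (norm_nonneg _) h)]
      exact h
    nlinarith [norm_nonneg (v z)]
  set d := v 0 with hdd
  have hd2 : d ^ 2 = - b := by rw [hdd, hv2 0 (by simp), h0]; simp
  have hdn : ‖d‖ = ω := by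
    have : ‖d‖ ^ 2 = ω ^ 2 := by rw [← norm_pow, hd2, norm_neg, hb]
    exact (sq_eq_sq₀ (norm_nonneg _) hω.le).1 this
  have hd1 : ‖d‖ < 1 := hdn ▸ hω1
  have hdc : d * conj d = (ω:ℂ) ^ 2 := by
    rw [Complex.mul_conj, Complex.normSq_eq_norm_sq, hdn]; push_cast; rfl
  have hωC : (ω:ℂ) ≠ 0 := by exact_mod_cast hω.ne'
  have hωC2 : (1 + (ω:ℂ)^2) ≠ 0 := by
    have : (1 + ω^2 : ℝ) ≠ 0 := by positivity
    exact_mod_cast this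
  have hbb : b = - d ^ 2 := by rw [hd2]; ring
  have hcb : conj b = - (conj d) ^ 2 := by rw [hbb]; simp
  set V : ℂ → ℂ := fun z => (v z - d) / (1 - conj d * v z) with hV
  have hVm : ∀ z ∈ ball (0:ℂ) 1, ‖V z‖ < 1 := by
    intro z hz
    have h := moebius_lt (hv1 z hz) hd1
    simp only [hV]
    rw [norm_div, div_lt_one (lt_of_le_of_lt (norm_nonneg _) h)]
    exact h
  refine ⟨d / ω, - conj d / ω, V, ?_, ?_, ?_, ?_, ?_, ?_, ?_⟩
  · rw [norm_div, hdn, Complex.norm_of_nonneg hω.le, div_self hω.ne']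
  · rw [norm_div, norm_neg, Complex.norm_conj, hdn, Complex.norm_of_nonneg hω.le, div_self hω.ne']
  · exact (hvd.sub_const _).div ((hvd.const_mul _).const_sub _) fun z hz => moebius_ne (hv1 z hz) hd1
  · intro x hx y hy hxy
    have hvv : v x = v y := by
      simp only [hV] at hxy
      have e1 := moebius_ne (hv1 x hx) hd1
      have e2 := moebius_ne (hv1 y hy) hd1
      rw [div_eq_div_iff e1 e2] at hxy
      have : (v x - v y) * (1 - d * conj d) = 0 := by linear_combination hxy
      rcases mul_eq_zero.1 this with h | h
      · exact sub_eq_zero.1 h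
      · exact absurd (by linear_combination h : 1 - conj d * d = 0) (moebius_ne hd1 hd1)
    have hww := hv2 x hx
    rw [hvv, hv2 y hy] at hww
    have e1 := moebius_ne (hw1 x hx) hb1
    have e2 := moebius_ne (hw1 y hy) hb1
    rw [div_eq_div_iff e2 e1] at hww
    have : (w x - w y) * (1 - b * conj b) = 0 := by linear_combination - hww
    rcases mul_eq_zero.1 this with h | h
    · exact hi hx hy (sub_eq_zero.1 h)
    · exact absurd (by linear_combination h : 1 - conj b * b = 0) (moebius_ne hb1 hb1)
  · intro z hz; simpa using hVm z hz
  · simp [hV, ← hdd]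
  · intro z hz
    have e1 := moebius_ne (hv1 z hz) hd1
    have e2 := moebius_ne (hw1 z hz) hb1
    have e3 : 1 + conj d * v z ≠ 0 := by
      have := moebius_ne (v := v z) (d := -d) (hv1 z hz) (by simpa using hd1)
      simpa using this
    have hsq := hv2 z hz
    rw [eq_div_iff e2] at hsq
    have e4 : 1 - (conj d) ^ 2 * v z ^ 2 ≠ 0 := by
      have : 1 - (conj d) ^ 2 * v z ^ 2 = (1 - conj d * v z) * (1 + conj d * v z) := by ring
      rw [this]; exact mul_ne_zero e1 e3
    have hw : w z = V z * ((v z + d) / (1 + conj d * v z)) := by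
      simp only [hV]
      rw [div_mul_div_comm, eq_div_iff (mul_ne_zero e1 e3)]
      rw [hbb] at hsq
      simp only [map_neg, map_pow] at hsq
      linear_combination -hsq
    have hvz : v z * (1 + conj d * V z) = V z + d := by
      have : V z * (1 - conj d * v z) = v z - d := div_mul_cancel₀ _ e1
      linear_combination - this
    have e5 : 1 + conj d * V z ≠ 0 := by
      have := moebius_ne (v := V z) (d := -d) (hVm z hz) (by simpa using hd1)
      simpa using this
    have e6 : 1 + (ω:ℂ)^2 + 2 * conj d * V z ≠ 0 := by
      have h : (1 + conj d * v z) * (1 + conj d * V z) = 1 + (ω:ℂ)^2 + 2 * conj d * V z := by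
        linear_combination (conj d) * hvz + hdc
      rw [← h]; exact mul_ne_zero e3 e5
    have h1 : (v z + d) * (1 + conj d * V z) = (1 + (ω:ℂ)^2) * V z + 2 * d := by
      linear_combination hvz + V z * hdc
    have h2 : (1 + conj d * v z) * (1 + conj d * V z) = 1 + (ω:ℂ)^2 + 2 * conj d * V z := by
      linear_combination (conj d) * hvz + hdc
    have hq : (v z + d) / (1 + conj d * v z) =
        ((1 + (ω:ℂ)^2) * V z + 2 * d) / (1 + (ω:ℂ)^2 + 2 * conj d * V z) := by
      rw [← h1, ← h2, mul_div_mul_right _ _ e5]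
    rw [hw, hq, koebeF]
    clear_value V v
    generalize V z = Y at *
    push_cast
    have e7 : 1 - 2 * (ω:ℂ) / (1 + (ω:ℂ)^2) * (- conj d / ω) * Y =
      (1 + (ω:ℂ)^2 + 2 * conj d * Y) / (1 + (ω:ℂ)^2) := by field_simp; ring
    rw [e7, div_div_eq_mul_div, ← mul_div_assoc, ← mul_div_assoc]
    congr 1
    have e8 : 2 * (ω:ℂ) / (1 + (ω:ℂ)^2) * (1 + (ω:ℂ)^2) = 2 * ω := div_mul_cancel₀ _ hωC2
    have e9 : d / ω * (conj d / ω) = 1 := by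
      rw [div_mul_div_comm, hdc]; field_simp
    have e10 : d / ω * ω = d := div_mul_cancel₀ _ hωC
    linear_combination (-Y * (d/ω)) * e8 - (Y ^ 2 * (1 + (ω:ℂ)^2)) * e9 - 2 * Y * e10

end

/-! ### Integrals against 1 + log y -/

section
open Filter Topology Set MeasureTheory

lemma int_pow_log (k : ℕ) (A B : ℝ) :
    IntegrableOn (fun y : ℝ => y ^ k * (A + B * Real.log y)) (Ioo 0 1) ∧
    ∫ y in Ioo (0:ℝ) 1, y ^ k * (A + B * Real.log y) = A / (k + 1) - B / (k + 1) ^ 2 := by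
  have hint : IntervalIntegrable (fun y : ℝ => y ^ k * (A + B * Real.log y)) volume 0 1 := by
    refine IntervalIntegrable.continuousOn_mul ?_ (by fun_prop)
    exact intervalIntegrable_const.add (intervalIntegral.intervalIntegrable_log'.const_mul B)
  refine ⟨?_, ?_⟩
  · exact (hint.1).mono_set Ioo_subset_Ioc_self
  · rw [← integral_Ioc_eq_integral_Ioo, ← intervalIntegral.integral_of_le zero_le_one]
    have hk : ((k:ℝ) + 1) ≠ 0 := by positivity
    rw [intervalIntegral.integral_eq_sub_of_hasDerivAt_of_le (f := fun y : ℝ =>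
      A / (k+1) * y ^ (k+1) + B / (k+1) * (y ^ k * (y * Real.log y)) - B / (k+1)^2 * y ^ (k+1))
      zero_le_one ?_ ?_ hint]
    · simp
    · have := Real.continuous_mul_log
      exact Continuous.continuousOn (by fun_prop)
    · intro y hy
      have hy0 : y ≠ 0 := hy.1.ne'
      have h1 : HasDerivAt (fun y : ℝ => y ^ (k+1)) (((k+1 : ℕ):ℝ) * y ^ k) y := by
        simpa using hasDerivAt_pow (k+1) y
      have h2 : HasDerivAt (fun y : ℝ => y ^ k * (y * Real.log y))
          (((k+1 : ℕ):ℝ) * y ^ k * Real.log y + y ^ (k+1) * y⁻¹) y := by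
        refine (h1.mul (Real.hasDerivAt_log hy0)).congr_of_eventuallyEq ?_
        filter_upwards with x
        simp only [Pi.mul_apply]; ring
      have h3 := ((h1.const_mul (A/(k+1))).add (h2.const_mul (B/(k+1)))).sub (h1.const_mul (B/(k+1)^2))
      refine h3.congr_deriv ?_
      push_cast
      field_simp
      ring

lemma int_bdd {q : ℝ → ℝ} (hm : Measurable q) {c : ℝ} (hb : ∀ y ∈ Ioo (0:ℝ) 1, |q y| ≤ c) :
    IntegrableOn (fun y => q y * (1 + Real.log y)) (Ioo 0 1) := by
  have h := (int_pow_log 0 1 1).1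
  simp only [pow_zero, one_mul] at h
  exact Integrable.bdd_mul (c := c) h hm.aestronglyMeasurable
    ((ae_restrict_iff' measurableSet_Ioo).2 (ae_of_all _ hb))

lemma abs_one_add_log_le {y : ℝ} (hy : y ∈ Ioo (0:ℝ) 1) : |1 + Real.log y| ≤ 1 - Real.log y := by
  have := Real.log_neg hy.1 hy.2
  rw [abs_le]; constructor <;> linarith

lemma abs_int_le {q : ℝ → ℝ} {k : ℕ} {c : ℝ} 
    (hb : ∀ y ∈ Ioo (0:ℝ) 1, |q y| ≤ c * y ^ k) :
    |∫ y in Ioo (0:ℝ) 1, q y * (1 + Real.log y)| ≤ c * (1 / (k+1) + 1 / (k+1)^2) := by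
  obtain ⟨h1, h2⟩ := int_pow_log k 1 (-1)
  have := norm_integral_le_of_norm_le (μ := volume.restrict (Ioo (0:ℝ) 1))
    (f := fun y => q y * (1 + Real.log y)) (h1.const_mul c) ?_
  · rw [integral_const_mul, h2] at this
    rw [← Real.norm_eq_abs]
    refine this.trans (le_of_eq ?_); ring
  · refine (ae_restrict_iff' measurableSet_Ioo).2 (ae_of_all _ fun y hy => ?_)
    rw [norm_mul, Real.norm_eq_abs, Real.norm_eq_abs, ← mul_assoc]
    have := abs_one_add_log_le hy
    have h0 := hb y hy
    refine mul_le_mul h0 (by linarith) (abs_nonneg _) ((abs_nonneg _).trans h0)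

/-- The Chebyshev polynomial `T₅` is bounded by one on `[-1, 1]`. -/
lemma cheb_five {x : ℝ} (h1 : -1 ≤ x) (h2 : x ≤ 1) : |16*x^5 - 20*x^3 + 5*x| ≤ 1 := by
  rw [← sq_le_one_iff_abs_le_one]
  have : 0 ≤ (1 - x^2) * (16*x^4 - 12*x^2 + 1)^2 := mul_nonneg (by nlinarith) (sq_nonneg _)
  nlinarith

/-- The integral `∫₀¹ y (1 - y) / (1 + y) · (1 + log y) dy`; its positivity is the one numerical fact
behind the negativity of the weights `sig`. -/
noncomputable def I0 : ℝ := ∫ y in Ioo (0:ℝ) 1, (y * (1 - y) / (1 + y)) * (1 + Real.log y)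

/-- The factor `y (1 - y) / (1 + y)` is replaced by the quartic polynomial for which the error is
`(2 / 3363) T₅(2y - 1) / (1 + y)`, `T₅` the Chebyshev polynomial (`T₅(-3) = -3363`). The integral of
the polynomial is explicit and exceeds the error. -/
lemma I0_pos : 0 < I0 := by
  have hP : ∫ y in Ioo (0:ℝ) 1, ((2 + 3261*y - 5824*y^2 + 3584*y^3 - 1024*y^4) / 3363) * (1 + Real.log y)
      = 26269/3026700 := by
    have h0 := int_pow_log 0 (2/3363) (2/3363)
    have h1 := int_pow_log 1 (3261/3363) (3261/3363)
    have h2 := int_pow_log 2 (-5824/3363) (-5824/3363)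
    have h3 := int_pow_log 3 (3584/3363) (3584/3363)
    have h4 := int_pow_log 4 (-1024/3363) (-1024/3363)
    have : ∀ y : ℝ, ((2 + 3261*y - 5824*y^2 + 3584*y^3 - 1024*y^4) / 3363) * (1 + Real.log y) =
      y^0 * (2/3363 + 2/3363 * Real.log y) + y^1 * (3261/3363 + 3261/3363 * Real.log y)
      + y^2 * (-5824/3363 + -5824/3363 * Real.log y) + y^3 * (3584/3363 + 3584/3363 * Real.log y)
      + y^4 * (-1024/3363 + -1024/3363 * Real.log y) := by intro y; ring
    simp_rw [this]
    rw [integral_add, integral_add, integral_add, integral_add, h0.2, h1.2, h2.2, h3.2, h4.2]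
    · norm_num
    · exact h0.1
    · exact h1.1
    · exact h0.1.add h1.1
    · exact h2.1
    · exact (h0.1.add h1.1).add h2.1
    · exact h3.1
    · exact ((h0.1.add h1.1).add h2.1).add h3.1
    · exact h4.1
  have hdiff : I0 - 26269/3026700 = ∫ y in Ioo (0:ℝ) 1, (y * (1 - y) / (1 + y) -
      (2 + 3261*y - 5824*y^2 + 3584*y^3 - 1024*y^4) / 3363) * (1 + Real.log y) := by
    rw [I0, ← hP, ← integral_sub]
    · simp_rw [sub_mul]
    · refine int_bdd (c := 1) (by fun_prop) fun y hy => ?_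
      obtain ⟨h0, h1⟩ := hy
      rw [abs_of_nonneg (by apply div_nonneg <;> nlinarith), div_le_one (by linarith)]
      nlinarith
    · refine int_bdd (c := 10) (by fun_prop) fun y hy => ?_
      obtain ⟨h0, h1⟩ := hy
      have e2 := pow_le_one₀ (n := 2) h0.le h1.le
      have e3 := pow_le_one₀ (n := 3) h0.le h1.le
      have e4 := pow_le_one₀ (n := 4) h0.le h1.le
      have p2 := pow_pos h0 2
      have p3 := pow_pos h0 3
      have p4 := pow_pos h0 4
      rw [abs_le]; constructor <;> linarith
  have hb := abs_int_le (k := 0) (c := 2/3363) (q := fun y => y * (1 - y) / (1 + y) -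
      (2 + 3261*y - 5824*y^2 + 3584*y^3 - 1024*y^4) / 3363) (by
    intro y hy
    obtain ⟨h0, h1⟩ := hy
    have hpos : 0 < 1 + y := by linarith
    have : y * (1 - y) / (1 + y) - (2 + 3261*y - 5824*y^2 + 3584*y^3 - 1024*y^4) / 3363
      = 2/3363 * (16*(2*y-1)^5 - 20*(2*y-1)^3 + 5*(2*y-1)) / (1 + y) := by
      field_simp
      ring
    rw [this, abs_div, abs_mul, abs_of_pos hpos, pow_zero, div_le_iff₀ hpos]
    have hc := cheb_five (x := 2*y-1) (by linarith) (by linarith)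
    rw [abs_of_pos (by norm_num : (0:ℝ) < 2/3363)]
    nlinarith)
  rw [← hdiff] at hb
  have := (abs_le.1 hb).1
  norm_num at this
  linarith

end

/-! ### The weights τ and σ -/

section
open Filter Topology Set MeasureTheory

/-- `√(1 + 4 e^{-t} k(y))`, where `k(y) = y / (1 - y)²` is the Koebe function. -/
noncomputable def sR (t y : ℝ) : ℝ := √(1 + 4 * Real.exp (-t) * (y / (1 - y) ^ 2))
/-- The solution `w ∈ [0, 1)` of `k(w) = e^{-t} k(y)`, `k` the Koebe function: the radial Löwner flow
started at `y`, with `∂w/∂t = -w / s = -w (1 - w) / (1 + w)`, `s = sR t y`. -/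
noncomputable def wR (t y : ℝ) : ℝ := (sR t y - 1) / (sR t y + 1)
/-- The weights `τ_k(t) = ∫₀¹ w(t, y)^k (1 + log y) dy`, with `τ_k(0) = k / (k + 1)²`. -/
noncomputable def tau (k : ℕ) (t : ℝ) : ℝ := ∫ y in Ioo (0:ℝ) 1, wR t y ^ k * (1 + Real.log y)
/-- The weights `σ_k(t) = -∫₀¹ w(t, y)^k / s(t, y) · (1 + log y) dy`, so that `τ_k' = k σ_k`. -/
noncomputable def sig (k : ℕ) (t : ℝ) : ℝ :=
  - ∫ y in Ioo (0:ℝ) 1, (wR t y ^ k / sR t y) * (1 + Real.log y)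

lemma kq_nonneg {y : ℝ} (hy : 0 ≤ y) : 0 ≤ y / (1 - y) ^ 2 := by positivity

lemma sR_sq (t : ℝ) {y : ℝ} (hy : 0 ≤ y) :
    sR t y ^ 2 = 1 + 4 * Real.exp (-t) * (y / (1 - y) ^ 2) :=
  Real.sq_sqrt (by positivity)

lemma one_le_sR (t : ℝ) {y : ℝ} (hy : 0 ≤ y) : 1 ≤ sR t y := by
  rw [sR, Real.one_le_sqrt]
  have : 0 ≤ 4 * Real.exp (-t) * (y / (1 - y) ^ 2) := by positivity
  linarith

lemma wR_nonneg (t : ℝ) {y : ℝ} (hy : 0 ≤ y) : 0 ≤ wR t y := by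
  have := one_le_sR t hy
  exact div_nonneg (by linarith) (by linarith)

lemma wR_le_one (t : ℝ) {y : ℝ} (hy : 0 ≤ y) : wR t y ≤ 1 := by
  have := one_le_sR t hy
  rw [wR, div_le_one (by linarith)]; linarith

lemma inv_sR (t : ℝ) {y : ℝ} (hy : 0 ≤ y) : 1 / sR t y = (1 - wR t y) / (1 + wR t y) := by
  have := one_le_sR t hy
  have h1 : sR t y + 1 ≠ 0 := by linarith
  have h2 : sR t y ≠ 0 := by linarith
  have e1 : 1 - wR t y = 2 / (sR t y + 1) := by rw [wR]; field_simp; ring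
  have e2 : 1 + wR t y = 2 * sR t y / (sR t y + 1) := by rw [wR]; field_simp; ring
  rw [e1, e2]; field_simp

lemma measurable_sR (t : ℝ) : Measurable (sR t) := by unfold sR; fun_prop
lemma measurable_wR (t : ℝ) : Measurable (wR t) := by
  have := measurable_sR t
  unfold wR; fun_prop

/-- `(1 + y) / (1 - y)` is the value of `sR t y` at `t = 0`. -/
lemma S_sq {y : ℝ} (hy : y ∈ Ioo (0:ℝ) 1) : ((1 + y) / (1 - y)) ^ 2 = 1 + 4 * (y / (1 - y) ^ 2) := by
  have : 1 - y ≠ 0 := by linarith [hy.2]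
  field_simp; ring

lemma S_ge_one {y : ℝ} (hy : y ∈ Ioo (0:ℝ) 1) : 1 ≤ (1 + y) / (1 - y) := by
  rw [le_div_iff₀ (by linarith [hy.2])]; linarith [hy.1]

lemma exp_neg_le_one {t : ℝ} (ht : 0 ≤ t) : Real.exp (-t) ≤ 1 := by simpa using ht

lemma sR_le_S {t : ℝ} (ht : 0 ≤ t) {y : ℝ} (hy : y ∈ Ioo (0:ℝ) 1) : sR t y ≤ (1 + y) / (1 - y) := by
  refine Real.sqrt_le_iff.2 ⟨by linarith [S_ge_one hy], ?_⟩
  rw [S_sq hy]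
  have h1 := exp_neg_le_one ht
  have h2 := kq_nonneg hy.1.le
  nlinarith

lemma S_frac {y : ℝ} (hy : y ∈ Ioo (0:ℝ) 1) :
    ((1 + y) / (1 - y) - 1) / ((1 + y) / (1 - y) + 1) = y := by
  have : 1 - y ≠ 0 := by linarith [hy.2]
  have h2 : (1 + y) / (1 - y) + 1 = 2 / (1 - y) := by field_simp; ring
  rw [h2]; field_simp; ring

lemma frac_mono {a b : ℝ} (ha : 1 ≤ a) (hab : a ≤ b) : (a - 1) / (a + 1) ≤ (b - 1) / (b + 1) := by
  rw [div_le_div_iff₀ (by linarith) (by linarith)]; nlinarith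

lemma wR_le {t : ℝ} (ht : 0 ≤ t) {y : ℝ} (hy : y ∈ Ioo (0:ℝ) 1) : wR t y ≤ y := by
  have := frac_mono (one_le_sR t hy.1.le) (sR_le_S ht hy)
  rwa [S_frac hy] at this

lemma wR_zero {y : ℝ} (hy : y ∈ Ioo (0:ℝ) 1) : wR 0 y = y := by
  have : sR 0 y = (1 + y) / (1 - y) := by
    rw [sR]
    simp only [neg_zero, Real.exp_zero, mul_one]
    rw [← S_sq hy, Real.sqrt_sq (by linarith [S_ge_one hy])]
  rw [wR, this, S_frac hy]

lemma tau_zero (k : ℕ) : tau k 0 = k / (k + 1) ^ 2 := by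
  rw [tau, setIntegral_congr_fun measurableSet_Ioo (g := fun y => y ^ k * (1 + 1 * Real.log y))
    (fun y hy => by simp only [wR_zero hy, one_mul]), (int_pow_log k 1 1).2]
  field_simp; ring

lemma abs_w_pow_le {t : ℝ} (ht : 0 ≤ t) {y : ℝ} (hy : y ∈ Ioo (0:ℝ) 1) (k : ℕ) :
    |wR t y ^ k| ≤ 1 * y ^ k := by
  have h0 := wR_nonneg t hy.1.le
  rw [abs_of_nonneg (by positivity), one_mul]
  exact pow_le_pow_left₀ h0 (wR_le ht hy) k

lemma abs_wm_le {t : ℝ} (ht : 0 ≤ t) {y : ℝ} (hy : y ∈ Ioo (0:ℝ) 1) (k : ℕ) :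
    |wR t y ^ k / sR t y| ≤ 1 * y ^ k := by
  have h1 := one_le_sR t hy.1.le
  rw [abs_div, abs_of_pos (by linarith : 0 < sR t y)]
  exact (div_le_self (abs_nonneg _) h1).trans (abs_w_pow_le ht hy k)

lemma pow_le_one' {y : ℝ} (hy : y ∈ Ioo (0:ℝ) 1) (k : ℕ) : 1 * y ^ k ≤ 1 := by
  rw [one_mul]; exact pow_le_one₀ hy.1.le hy.2.le

lemma int_tau {t : ℝ} (ht : 0 ≤ t) (k : ℕ) :
    IntegrableOn (fun y => wR t y ^ k * (1 + Real.log y)) (Ioo 0 1) :=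
  int_bdd (c := 1) ((measurable_wR t).pow_const k)
    fun _ hy => (abs_w_pow_le ht hy k).trans (pow_le_one' hy k)

lemma int_sig {t : ℝ} (ht : 0 ≤ t) (k : ℕ) :
    IntegrableOn (fun y => (wR t y ^ k / sR t y) * (1 + Real.log y)) (Ioo 0 1) :=
  int_bdd (c := 1) (((measurable_wR t).pow_const k).div (measurable_sR t))
    fun _ hy => (abs_wm_le ht hy k).trans (pow_le_one' hy k)

lemma two_div_bound (k : ℕ) : 1 * (1 / ((k:ℝ)+1) + 1 / ((k:ℝ)+1)^2) ≤ 2 / (k + 1) := by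
  have : 1 / ((k:ℝ)+1)^2 ≤ 1 / ((k:ℝ)+1) := by
    apply one_div_le_one_div_of_le (by positivity)
    nlinarith [(Nat.cast_nonneg k : (0:ℝ) ≤ k)]
  have h2 : 2 / ((k:ℝ)+1) = 1 / ((k:ℝ)+1) + 1 / ((k:ℝ)+1) := by ring
  rw [h2, one_mul]; linarith

lemma abs_tau_le {t : ℝ} (ht : 0 ≤ t) (k : ℕ) : |tau k t| ≤ 2 / (k + 1) :=
  (abs_int_le fun _ hy => abs_w_pow_le ht hy k).trans (two_div_bound k)

lemma abs_sig_le {t : ℝ} (ht : 0 ≤ t) (k : ℕ) : |sig k t| ≤ 2 / (k + 1) := by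
  rw [sig, abs_neg]
  exact (abs_int_le fun _ hy => abs_wm_le ht hy k).trans (two_div_bound k)

/-- Since `1 / s = (1 - w) / (1 + w)`, one has `w^k - w^(k+1) = (w^k + w^(k+1)) / s`. -/
lemma tau_sub {t : ℝ} (ht : 0 ≤ t) (k : ℕ) :
    tau k t - tau (k + 1) t = -(sig k t + sig (k + 1) t) := by
  rw [tau, tau, sig, sig, ← integral_sub (int_tau ht k) (int_tau ht (k+1)), ← neg_add, neg_neg,
    ← integral_add (int_sig ht k) (int_sig ht (k+1))]
  refine setIntegral_congr_fun measurableSet_Ioo fun y hy => ?_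
  have h1 := inv_sR t hy.1.le
  have h2 : 1 + wR t y ≠ 0 := by linarith [wR_nonneg t hy.1.le]
  rw [div_eq_mul_one_div, div_eq_mul_one_div (wR t y ^ (k+1)), h1]
  field_simp
  ring

lemma hasDerivAt_sR (t : ℝ) {y : ℝ} (hy : 0 ≤ y) :
    HasDerivAt (fun t => sR t y) (-(sR t y ^ 2 - 1) / (2 * sR t y)) t := by
  have h1 : HasDerivAt (fun t : ℝ => 1 + 4 * Real.exp (-t) * (y / (1 - y) ^ 2))
      (-(4 * Real.exp (-t) * (y / (1 - y) ^ 2))) t := by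
    have := (((hasDerivAt_neg t).exp.const_mul 4).mul_const (y / (1 - y) ^ 2)).const_add 1
    refine this.congr_deriv ?_; ring
  have h2 := h1.sqrt (by have : 0 ≤ 4 * Real.exp (-t) * (y / (1 - y) ^ 2) := by positivity
                         linarith)
  refine h2.congr_deriv ?_
  rw [sR_sq t hy]
  simp only [sR]; congr 1; ring

lemma hasDerivAt_wR (t : ℝ) {y : ℝ} (hy : 0 ≤ y) :
    HasDerivAt (fun t => wR t y) (-(wR t y / sR t y)) t := by
  have h := hasDerivAt_sR t hy
  have h1 := one_le_sR t hy
  refine ((h.sub_const 1).div (h.add_const 1) (by linarith)).congr_deriv ?_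
  have h2 : sR t y ≠ 0 := by linarith
  have h3 : sR t y + 1 ≠ 0 := by linarith
  rw [wR]; field_simp; ring

lemma hasDerivAt_w_pow (t : ℝ) {y : ℝ} (hy : 0 ≤ y) (k : ℕ) :
    HasDerivAt (fun t => wR t y ^ k) (-(k * (wR t y ^ k / sR t y))) t := by
  rcases Nat.eq_zero_or_pos k with rfl | hk
  · simpa using hasDerivAt_const t (1:ℝ)
  refine ((hasDerivAt_wR t hy).pow k).congr_deriv ?_
  have : wR t y ^ k = wR t y ^ (k - 1) * wR t y := by rw [← pow_succ, Nat.sub_add_cancel hk]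
  rw [this]; ring

lemma hasDerivAt_wm (t : ℝ) {y : ℝ} (hy : 0 ≤ y) (k : ℕ) :
    ∃ D : ℝ, HasDerivAt (fun t => wR t y ^ k / sR t y) D t ∧ |D| ≤ (k:ℝ) + 1 := by
  have h1 := one_le_sR t hy
  have h2 : sR t y ≠ 0 := by linarith
  refine ⟨_, (hasDerivAt_w_pow t hy k).div (hasDerivAt_sR t hy) h2, ?_⟩
  have hw0 : 0 ≤ wR t y ^ k := pow_nonneg (wR_nonneg t hy) k
  have hw1 : wR t y ^ k ≤ 1 := pow_le_one₀ (wR_nonneg t hy) (wR_le_one t hy)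
  have e : (-(↑k * (wR t y ^ k / sR t y)) * sR t y - wR t y ^ k * (-(sR t y ^ 2 - 1) / (2 * sR t y)))
      / sR t y ^ 2 = wR t y ^ k * (-(k * (1 / sR t y ^ 2)) + (1 - 1 / sR t y ^ 2) * (1 / sR t y) / 2) := by
    field_simp; ring
  rw [e, abs_mul, abs_of_nonneg hw0]
  have hi0 : 0 ≤ 1 / sR t y ^ 2 := by positivity
  have hi1 : 1 / sR t y ^ 2 ≤ 1 := by
    rw [div_le_one (by positivity)]; nlinarith
  have hj0 : 0 ≤ 1 / sR t y := by positivity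
  have hj1 : 1 / sR t y ≤ 1 := by rw [div_le_one (by positivity)]; exact h1
  have hk : (0:ℝ) ≤ k := Nat.cast_nonneg k
  have a1 : |-((k:ℝ) * (1 / sR t y ^ 2))| ≤ (k:ℝ) := by
    rw [abs_neg, abs_of_nonneg (by positivity)]; nlinarith
  have a2 : |(1 - 1 / sR t y ^ 2) * (1 / sR t y) / 2| ≤ 1 := by
    rw [abs_of_nonneg (by apply div_nonneg (mul_nonneg (by linarith) hj0); norm_num)]
    nlinarith
  calc _ ≤ 1 * ((k:ℝ) + 1) := mul_le_mul hw1 ((abs_add_le _ _).trans (add_le_add a1 a2)) (abs_nonneg _) zero_le_one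
    _ = _ := one_mul _

lemma w_pow_taylor (t : ℝ) {h : ℝ} (hh : 0 ≤ h) {y : ℝ} (hy : 0 ≤ y) (k : ℕ) :
    |wR (t + h) y ^ k - wR t y ^ k + h * k * (wR t y ^ k / sR t y)| ≤ k * (k + 1) * h ^ 2 := by
  have hk : (0:ℝ) ≤ k := Nat.cast_nonneg k
  choose D hD hDb using fun s => hasDerivAt_wm s hy k
  have lip : ∀ s ∈ Icc t (t + h), |wR s y ^ k / sR s y - wR t y ^ k / sR t y| ≤ (k + 1) * h := by
    intro s hs
    have := (convex_univ (𝕜 := ℝ) (E := ℝ)).norm_image_sub_le_of_norm_hasDerivWithin_le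
      (f := fun t => wR t y ^ k / sR t y) (f' := D) (C := k + 1) (x := t) (y := s)
      (fun x _ => (hD x).hasDerivWithinAt) (fun x _ => by simpa using hDb x) trivial trivial
    simp only [Real.norm_eq_abs] at this
    refine this.trans (mul_le_mul_of_nonneg_left ?_ (by positivity))
    rw [abs_of_nonneg (by linarith [hs.1])]; linarith [hs.2]
  have := (convex_Icc t (t + h)).norm_image_sub_le_of_norm_hasDerivWithin_le
      (f := fun s => wR s y ^ k + (k * (wR t y ^ k / sR t y)) * s)
      (f' := fun s => -(k * (wR s y ^ k / sR s y)) + (k * (wR t y ^ k / sR t y)) * 1)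
      (C := k * ((k + 1) * h)) (x := t) (y := t + h)
      (fun x _ => ((hasDerivAt_w_pow x hy k).add ((hasDerivAt_id x).const_mul _)).hasDerivWithinAt)
      (fun s hs => ?_) ⟨le_refl _, by linarith⟩ ⟨by linarith, le_refl _⟩
  · simp only [Real.norm_eq_abs, add_sub_cancel_left, abs_of_nonneg hh] at this
    calc _ = _ := by congr 1; ring
      _ ≤ _ := this
      _ = _ := by ring
  · have e : -(k * (wR s y ^ k / sR s y)) + (k * (wR t y ^ k / sR t y)) * 1
      = - (k * (wR s y ^ k / sR s y - wR t y ^ k / sR t y)) := by ring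
    rw [e, norm_neg, norm_mul, Real.norm_eq_abs, Real.norm_eq_abs, abs_of_nonneg hk]
    exact mul_le_mul_of_nonneg_left (lip s hs) hk

lemma tau_taylor {t h : ℝ} (ht : 0 ≤ t) (hh : 0 ≤ h) (k : ℕ) :
    |tau k (t + h) - tau k t - h * k * sig k t| ≤ 2 * (k * (k + 1)) * h ^ 2 := by
  have e : tau k (t + h) - tau k t - h * k * sig k t = ∫ y in Ioo (0:ℝ) 1,
      (wR (t + h) y ^ k - wR t y ^ k + h * k * (wR t y ^ k / sR t y)) * (1 + Real.log y) := by
    have i1 := int_tau (by linarith : 0 ≤ t + h) k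
    have i2 := int_tau ht k
    have i3 := (int_sig ht k).const_mul (h * k)
    rw [tau, tau, sig, mul_neg, sub_neg_eq_add, ← integral_sub i1 i2, ← integral_const_mul,
      ← integral_add]
    · congr 1; ext y; ring
    · exact i1.sub i2
    · exact i3
  rw [e]
  refine (abs_int_le (k := 0) (c := k * (k + 1) * h ^ 2) fun y hy => ?_).trans (le_of_eq ?_)
  · simpa using w_pow_taylor t hh hy.1.le k
  · norm_num; ring

end

/-! ### Signs of the weights -/

section
open Filter Topology Set MeasureTheory

/-- The factor `Λ` in `w / s = e^{-t} Λ y (1 - y) / (1 + y)` (see `wm_eq`); it is increasing in `y`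
and at least one. -/
noncomputable def lam (t y : ℝ) : ℝ :=
  (((1 + y) / (1 - y) + 1) / (sR t y + 1)) ^ 2 * (((1 + y) / (1 - y)) / sR t y)

lemma wm_eq (t : ℝ) {y : ℝ} (hy : y ∈ Ioo (0:ℝ) 1) :
    wR t y / sR t y = Real.exp (-t) * lam t y * (y * (1 - y) / (1 + y)) := by
  have h1 := one_le_sR t hy.1.le
  have e1 : 1 - y ≠ 0 := by linarith [hy.2]
  have e2 : 1 + y ≠ 0 := by linarith [hy.1]
  have e3 : sR t y ≠ 0 := by linarith
  have e4 : sR t y + 1 ≠ 0 := by linarith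
  have hs := sR_sq t hy.1.le
  have hS : (1 + y) / (1 - y) + 1 = 2 / (1 - y) := by field_simp; ring
  have hs' : sR t y - 1 = 4 * Real.exp (-t) * (y / (1 - y) ^ 2) / (sR t y + 1) := by
    rw [eq_div_iff e4]; linear_combination hs
  rw [wR, lam, hS, hs']
  field_simp
  ring

lemma S_mono {x y : ℝ} (hx : x ∈ Ioo (0:ℝ) 1) (hy : y ∈ Ioo (0:ℝ) 1) (hxy : x ≤ y) :
    (1 + x) / (1 - x) ≤ (1 + y) / (1 - y) := by
  rw [div_le_div_iff₀ (by linarith [hx.2]) (by linarith [hy.2])]; nlinarith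

lemma sR_sq' (t : ℝ) {y : ℝ} (hy : y ∈ Ioo (0:ℝ) 1) :
    sR t y ^ 2 = 1 + Real.exp (-t) * (((1 + y) / (1 - y)) ^ 2 - 1) := by
  rw [sR_sq t hy.1.le, S_sq hy]; ring

/-- With `c = e^{-t}`, `S = (1 + y) / (1 - y)` and `s = √(1 + c (S² - 1))`, the quantities `s`, `S / s`
and `(S + 1) / (s + 1)` are increasing in `S`; the first makes `wR` and the other two make `lam`
increasing in `y`. -/
lemma lam_aux {c S T s u : ℝ} (hc0 : 0 < c) (hc1 : c ≤ 1) (hS : 1 ≤ S) (hST : S ≤ T)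
    (hs : 1 ≤ s) (hu : 1 ≤ u) (es : s ^ 2 = 1 + c * (S ^ 2 - 1)) (eu : u ^ 2 = 1 + c * (T ^ 2 - 1)) :
    s ≤ u ∧ S / s ≤ T / u ∧ (S + 1) / (s + 1) ≤ (T + 1) / (u + 1) := by
  have hsu : s ≤ u := by
    refine le_of_sq_le_sq ?_ (by linarith)
    rw [es, eu]; nlinarith [mul_le_mul_of_nonneg_left (mul_self_le_mul_self (by linarith) hST) hc0.le]
  have h2 : S * u ≤ T * s := by
    refine le_of_sq_le_sq ?_ (by nlinarith)
    rw [mul_pow, mul_pow, es, eu]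
    have : 0 ≤ (1 - c) * (T ^ 2 - S ^ 2) := mul_nonneg (by linarith) (by nlinarith)
    nlinarith
  have hcS : c * S ≤ s := by
    refine le_of_sq_le_sq ?_ (by linarith)
    rw [es, mul_pow]
    have : 0 ≤ c * (1 - c) * S ^ 2 := by apply mul_nonneg (mul_nonneg hc0.le (by linarith)) (sq_nonneg _)
    nlinarith
  have hcT : c * T ≤ u := by
    refine le_of_sq_le_sq ?_ (by linarith)
    rw [eu, mul_pow]
    have : 0 ≤ c * (1 - c) * T ^ 2 := by apply mul_nonneg (mul_nonneg hc0.le (by linarith)) (sq_nonneg _)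
    nlinarith
  have h3 : u - s ≤ T - S := by
    have e : (u - s) * (u + s) = (T - S) * (c * T + c * S) := by linear_combination eu - es
    have : (u - s) * (u + s) ≤ (T - S) * (u + s) := by
      rw [e]; exact mul_le_mul_of_nonneg_left (by linarith) (by linarith)
    exact le_of_mul_le_mul_right this (by linarith)
  refine ⟨hsu, ?_, ?_⟩
  · rw [div_le_div_iff₀ (by linarith) (by linarith)]; exact h2
  · rw [div_le_div_iff₀ (by linarith) (by linarith)]; nlinarith

lemma wR_lam_mono {t : ℝ} (ht : 0 ≤ t) {x y : ℝ} (hx : x ∈ Ioo (0:ℝ) 1) (hy : y ∈ Ioo (0:ℝ) 1)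
    (hxy : x ≤ y) : wR t x ≤ wR t y ∧ lam t x ≤ lam t y := by
  have h1 := one_le_sR t hx.1.le
  have h2 := one_le_sR t hy.1.le
  have hS1 := S_ge_one hx
  obtain ⟨a, b, c⟩ := lam_aux (Real.exp_pos (-t)) (exp_neg_le_one ht) (S_ge_one hx) (S_mono hx hy hxy)
    h1 h2 (sR_sq' t hx) (sR_sq' t hy)
  refine ⟨frac_mono h1 a, ?_⟩
  have hp1 : 0 ≤ ((1 + x) / (1 - x) + 1) / (sR t x + 1) := div_nonneg (by linarith) (by linarith)
  have hp2 : 0 ≤ ((1 + x) / (1 - x)) / sR t x := div_nonneg (by linarith) (by linarith)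
  exact mul_le_mul (pow_le_pow_left₀ hp1 c 2) b hp2 (sq_nonneg _)

lemma one_le_lam {t : ℝ} (ht : 0 ≤ t) {y : ℝ} (hy : y ∈ Ioo (0:ℝ) 1) : 1 ≤ lam t y := by
  have h1 := one_le_sR t hy.1.le
  have h2 := sR_le_S ht hy
  have a : 1 ≤ ((1 + y) / (1 - y) + 1) / (sR t y + 1) := by
    rw [le_div_iff₀ (by linarith)]; linarith
  have b : 1 ≤ ((1 + y) / (1 - y)) / sR t y := by
    rw [le_div_iff₀ (by linarith)]; linarith
  unfold lam; nlinarith [mul_le_mul a a zero_le_one (by linarith)]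

lemma psi_pos {y : ℝ} (hy : y ∈ Ioo (0:ℝ) 1) : 0 < y * (1 - y) / (1 + y) := by
  have := hy.1; have := hy.2
  exact div_pos (mul_pos hy.1 (by linarith)) (by linarith)

/-- A Chebyshev-type inequality: `1 + log y` changes sign from negative to positive at `y = e⁻¹` and
`w^k e^{-t} Λ` is increasing in `y`, so replacing the latter by its value at `e⁻¹` only lowers the
integral. -/
lemma sig_le {t : ℝ} (ht : 0 ≤ t) (k : ℕ) :
    sig (k + 1) t ≤ - (wR t (Real.exp (-1)) ^ k * Real.exp (-t) * lam t (Real.exp (-1)) * I0) := by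
  have hE : Real.exp (-1) ∈ Ioo (0:ℝ) 1 := ⟨Real.exp_pos _, by simp⟩
  set q : ℝ → ℝ := fun y => wR t y ^ k * Real.exp (-t) * lam t y with hq
  have hqm : ∀ x ∈ Ioo (0:ℝ) 1, ∀ y ∈ Ioo (0:ℝ) 1, x ≤ y → q x ≤ q y := by
    intro x hx y hy hxy
    obtain ⟨a, b⟩ := wR_lam_mono ht hx hy hxy
    have := one_le_lam ht hx
    refine mul_le_mul (mul_le_mul_of_nonneg_right (pow_le_pow_left₀ (wR_nonneg t hx.1.le) a k)
      (Real.exp_pos _).le) b (by linarith) ?_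
    exact mul_nonneg (pow_nonneg (wR_nonneg t hy.1.le) k) (Real.exp_pos _).le
  rw [sig, neg_le_neg_iff]
  change q (Real.exp (-1)) * I0 ≤ _
  rw [I0, ← integral_const_mul]
  refine setIntegral_mono_on ?_ (int_sig ht (k+1)) measurableSet_Ioo fun y hy => ?_
  · refine Integrable.const_mul ?_ _
    refine int_bdd (c := 1) (by fun_prop) fun y hy => ?_
    obtain ⟨h0, h1⟩ := hy
    rw [abs_of_nonneg (by apply div_nonneg <;> nlinarith), div_le_one (by linarith)]
    nlinarith
  · have e : wR t y ^ (k+1) / sR t y = q y * (y * (1 - y) / (1 + y)) := by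
      rw [pow_succ, mul_div_assoc, wm_eq t hy]; simp only [hq]; ring
    rw [e]
    have hψ := psi_pos hy
    have key : 0 ≤ (q y - q (Real.exp (-1))) * (1 + Real.log y) := by
      rcases le_total (Real.exp (-1)) y with h | h
      · refine mul_nonneg (sub_nonneg.2 (hqm _ hE _ hy h)) ?_
        have := Real.log_le_log hE.1 h
        rw [Real.log_exp] at this; linarith
      · refine mul_nonneg_of_nonpos_of_nonpos (sub_nonpos.2 (hqm _ hy _ hE h)) ?_
        have := Real.log_le_log hy.1 h
        rw [Real.log_exp] at this; linarith
    nlinarith [mul_nonneg hψ.le key]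

lemma sig_nonpos {t : ℝ} (ht : 0 ≤ t) {k : ℕ} (hk : 1 ≤ k) : sig k t ≤ 0 := by
  obtain ⟨k, rfl⟩ : ∃ j, k = j + 1 := ⟨k - 1, by omega⟩
  refine (sig_le ht k).trans ?_
  have hE : Real.exp (-1) ∈ Ioo (0:ℝ) 1 := ⟨Real.exp_pos _, by simp⟩
  have := one_le_lam ht hE
  have h2 := I0_pos
  have h3 := wR_nonneg t hE.1.le
  have : 0 ≤ wR t (Real.exp (-1)) ^ k * Real.exp (-t) * lam t (Real.exp (-1)) * I0 := by positivity
  linarith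

/-- Uniform negativity of finitely many `σ_k` on the unit time interval. -/
lemma sig_neg (K : ℕ) : ∃ ε > 0, ∀ t, 0 ≤ t → t ≤ 1 → ∀ k, 1 ≤ k → k ≤ K → sig k t ≤ - ε := by
  have hE : Real.exp (-1) ∈ Ioo (0:ℝ) 1 := ⟨Real.exp_pos _, by simp⟩
  set ψ := Real.exp (-1) * (1 - Real.exp (-1)) / (1 + Real.exp (-1)) with hψd
  have hψ : 0 < ψ := psi_pos hE
  have hψ1 : Real.exp (-1) * ψ ≤ 1 := by
    have : ψ ≤ 1 := by rw [hψd, div_le_one (by linarith [hE.1])]; nlinarith [hE.1, hE.2]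
    nlinarith [hE.1, hE.2]
  have hI := I0_pos
  refine ⟨(Real.exp (-1) * ψ) ^ K * Real.exp (-1) * I0, by positivity, ?_⟩
  intro t ht ht1 k hk hkK
  obtain ⟨k, rfl⟩ : ∃ j, k = j + 1 := ⟨k - 1, by omega⟩
  refine (sig_le ht k).trans (neg_le_neg ?_)
  have hL := one_le_lam ht hE
  have hc : Real.exp (-1) ≤ Real.exp (-t) := Real.exp_le_exp.2 (by linarith)
  have hw : Real.exp (-1) * ψ ≤ wR t (Real.exp (-1)) := by
    have h1 := one_le_sR t hE.1.le
    have h2 := wm_eq t hE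
    have h3 : wR t (Real.exp (-1)) / sR t (Real.exp (-1)) ≤ wR t (Real.exp (-1)) :=
      div_le_self (wR_nonneg t hE.1.le) h1
    rw [h2] at h3
    refine le_trans (mul_le_mul_of_nonneg_right ?_ hψ.le) h3
    nlinarith [Real.exp_pos (-t)]
  have hp : (Real.exp (-1) * ψ) ^ K ≤ wR t (Real.exp (-1)) ^ k :=
    (pow_le_pow_of_le_one (by positivity) hψ1 (by omega)).trans
      (pow_le_pow_left₀ (by positivity) hw k)
  have h4 : (Real.exp (-1) * ψ) ^ K * Real.exp (-1) ≤ wR t (Real.exp (-1)) ^ k * Real.exp (-t) :=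
    mul_le_mul hp hc hE.1.le (pow_nonneg (wR_nonneg t hE.1.le) k)
  have h5 : (Real.exp (-1) * ψ) ^ K * Real.exp (-1) ≤
      wR t (Real.exp (-1)) ^ k * Real.exp (-t) * lam t (Real.exp (-1)) := by
    have : 0 ≤ wR t (Real.exp (-1)) ^ k * Real.exp (-t) :=
      mul_nonneg (pow_nonneg (wR_nonneg t hE.1.le) k) (Real.exp_pos _).le
    nlinarith
  exact mul_le_mul_of_nonneg_right h5 hI.le

/-- By `tau_sub` and `sig_nonpos`, `τ_k` is decreasing in `k`, and it tends to `0`. -/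
lemma tau_nonneg {t : ℝ} (ht : 0 ≤ t) {k : ℕ} (hk : 1 ≤ k) : 0 ≤ tau k t := by
  have hanti : ∀ j, tau (k + j) t ≤ tau k t := by
    intro j
    induction j with
    | zero => simp
    | succ j ih =>
      have h1 := tau_sub ht (k + j)
      have h2 := sig_nonpos ht (k := k + j) (by omega)
      have h3 := sig_nonpos ht (k := k + j + 1) (by omega)
      rw [← add_assoc]; linarith
  have hlim : Tendsto (fun j : ℕ => - (2 / (((j:ℕ):ℝ) + 1))) atTop (𝓝 0) := by
    have := (tendsto_one_div_add_atTop_nhds_zero_nat (𝕜 := ℝ)).const_mul (-2)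
    rw [mul_zero] at this
    refine this.congr fun j => ?_
    ring
  refine le_of_tendsto (hlim.comp (tendsto_add_atTop_nat k)) (Eventually.of_forall fun j => ?_)
  have h1 := (abs_le.1 (abs_tau_le ht (k + j))).1
  have h2 := hanti j
  simp only [Function.comp]
  rw [add_comm j k]
  exact h1.trans h2

end

/-! ### The energy functional and its first variation -/

section
open Filter Topology Set

/-- The Taylor coefficients of `(z C' + 1/2) / (1 - κ z)` when `c` are those of `C`, given by their
recursion (see `cf_uS`). -/
noncomputable def uS (κ : ℂ) (c : ℕ → ℂ) : ℕ → ℂ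
  | 0 => 1 / 2
  | k + 1 => κ * uS κ c k + (k + 1 : ℂ) * c (k + 1)

/-- The coefficient of `z^(k+1)` in `(1 + κ z) (z C' + 1/2) / (1 - κ z) - 1/2` (see `cf_eS`): minus
the velocity of `c (k + 1)` under the Löwner flow with driving value `κ`. The index is shifted by
one. -/
noncomputable def eS (κ : ℂ) (c : ℕ → ℂ) (k : ℕ) : ℂ := uS κ c (k + 1) + κ * uS κ c k

/-- The energy of the first `N` logarithmic coefficients: the Milin-type functional
`∑ τ_k(t) (k |c_k|² - 1/k)` plus the penalty `η max(0, 1 - t) |K c_K - c_1^K|²`, which vanishes when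
`c` are the coefficients of a rotated Koebe function. -/
noncomputable def Phi (K N : ℕ) (η t : ℝ) (c : ℕ → ℂ) : ℝ :=
  ∑ k ∈ Finset.range N, tau (k + 1) t * ((k + 1 : ℝ) * ‖c (k + 1)‖ ^ 2 - 1 / (k + 1 : ℝ))
    + η * (max 0 (1 - t) * ‖(K : ℂ) * c K - c 1 ^ K‖ ^ 2)

lemma uS_succ (κ : ℂ) (c : ℕ → ℂ) (k : ℕ) :
    uS κ c (k + 1) = κ * uS κ c k + (k + 1 : ℂ) * c (k + 1) := rfl

lemma parallelogram_aux (a b : ℂ) :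
    ‖a - b‖ ^ 2 + ‖a + b‖ ^ 2 = 2 * ‖a‖ ^ 2 + 2 * ‖b‖ ^ 2 ∧
    ((a + b) * (starRingEnd ℂ) (a - b)).re = ‖a‖ ^ 2 - ‖b‖ ^ 2 := by
  simp only [← Complex.normSq_eq_norm_sq, Complex.normSq_apply]
  simp; constructor <;> ring

/-- The left-hand side is the first variation of `∑ τ_k (k |c_k|² - 1/k)` along the flow, plus
`∑ σ_k |e_k|²`. It telescopes by `tau_sub` and the parallelogram law applied to `u_k` and
`κ u_{k-1}`, whose difference is `k c_k` and whose sum is `e_k`. -/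
lemma energy_identity {κ : ℂ} (hκ : ‖κ‖ = 1) (c : ℕ → ℂ) {t : ℝ} (ht : 0 ≤ t) (N : ℕ) :
    ∑ k ∈ Finset.range N, (sig (k + 1) t * (((k + 1 : ℝ) * ‖c (k + 1)‖) ^ 2 - 1)
      + 2 * tau (k + 1) t * ((k + 1 : ℝ) * (eS κ c k * (starRingEnd ℂ) (c (k + 1))).re)
      + sig (k + 1) t * ‖eS κ c k‖ ^ 2)
    = 2 * (tau (N + 1) t - sig (N + 1) t) * (‖uS κ c N‖ ^ 2 - 1 / 4) := by
  induction N with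
  | zero => simp [uS]; right; norm_num
  | succ N ih =>
    rw [Finset.sum_range_succ, ih]
    have hx : uS κ c (N + 1) - κ * uS κ c N = (N + 1 : ℂ) * c (N + 1) := by rw [uS_succ]; ring
    obtain ⟨h1, h2⟩ := parallelogram_aux (uS κ c (N + 1)) (κ * uS κ c N)
    have hn : ‖(N + 1 : ℂ)‖ = (N + 1 : ℝ) := by
      have := Complex.norm_natCast (N + 1); push_cast at this; exact this
    rw [hx, norm_mul, norm_mul, hκ, one_mul, hn] at h1
    rw [hx, norm_mul, hκ, one_mul] at h2
    have h3 : ((uS κ c (N + 1) + κ * uS κ c N) * (starRingEnd ℂ) ((N + 1 : ℂ) * c (N + 1))).re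
       = (N + 1 : ℝ) * (eS κ c N * (starRingEnd ℂ) (c (N + 1))).re := by
      rw [eS, map_mul]
      have : (starRingEnd ℂ) (N + 1 : ℂ) = (((N + 1 : ℕ) : ℝ) : ℂ) := by simp
      rw [this, mul_left_comm, Complex.re_ofReal_mul]; push_cast; rfl
    rw [h3] at h2
    have h4 := tau_sub ht (N + 1)
    change _ + ‖eS κ c N‖ ^ 2 = _ at h1
    rw [h2]
    linear_combination sig (N + 1) t * h1 + 2 * (‖uS κ c (N + 1)‖ ^ 2 - 1 / 4) * h4

/-- The boundary term of `energy_identity` is at least `-(τ_{N+1} - σ_{N+1}) / 2 ≥ -2 / (N + 2)`. -/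
lemma energy_ineq {κ : ℂ} (hκ : ‖κ‖ = 1) (c : ℕ → ℂ) {t : ℝ} (ht : 0 ≤ t) (N : ℕ) :
    ∑ k ∈ Finset.range N, (-sig (k + 1) t) * ‖eS κ c k‖ ^ 2 - 2 / (N + 2) ≤
    ∑ k ∈ Finset.range N, (sig (k + 1) t * (((k + 1 : ℝ) * ‖c (k + 1)‖) ^ 2 - 1)
      + 2 * tau (k + 1) t * ((k + 1 : ℝ) * (eS κ c k * (starRingEnd ℂ) (c (k + 1))).re)) := by
  have h := energy_identity hκ c ht N
  rw [Finset.sum_add_distrib] at h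
  have h1 := (abs_le.1 (abs_tau_le ht (N + 1))).2
  have h2 := (abs_le.1 (abs_sig_le ht (N + 1))).1
  have h3 := tau_nonneg ht (k := N + 1) (by omega)
  have h4 := sig_nonpos ht (k := N + 1) (by omega)
  push_cast at h1 h2
  have e : 2 / ((N:ℝ) + 1 + 1) = 2 / (N + 2) := by ring_nf
  rw [e] at h1 h2
  have h5 : -(2 / ((N:ℝ) + 2)) ≤ 2 * (tau (N + 1) t - sig (N + 1) t) * (‖uS κ c N‖ ^ 2 - 1 / 4) := by
    nlinarith [sq_nonneg ‖uS κ c N‖, mul_nonneg (sub_nonneg.2 (h4.trans h3)) (sq_nonneg ‖uS κ c N‖)]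
  simp only [neg_mul, Finset.sum_neg_distrib]
  linarith

lemma pow_sub_le {p q : ℂ} (hp : ‖p‖ ≤ 2) (hq : ‖q‖ ≤ 2) (K : ℕ) :
    ‖p ^ K - q ^ K‖ ≤ K * 2 ^ K * ‖p - q‖ := by
  induction K with
  | zero => simp
  | succ K ih =>
    have e : p ^ (K + 1) - q ^ (K + 1) = p ^ K * (p - q) + (p ^ K - q ^ K) * q := by ring
    rw [e]
    have h1 : ‖p ^ K‖ ≤ 2 ^ K := by rw [norm_pow]; exact pow_le_pow_left₀ (norm_nonneg _) hp K
    calc _ ≤ ‖p ^ K‖ * ‖p - q‖ + ‖p ^ K - q ^ K‖ * ‖q‖ := by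
          refine (norm_add_le _ _).trans ?_; rw [norm_mul, norm_mul]
      _ ≤ 2 ^ K * ‖p - q‖ + (K * 2 ^ K * ‖p - q‖) * 2 := by gcongr
      _ ≤ _ := by
          push_cast
          have : 0 ≤ 2 ^ K * ‖p - q‖ := by positivity
          rw [pow_succ]; linarith

lemma uS_bound {κ : ℂ} (hκ : ‖κ‖ = 1) {c : ℕ → ℂ} {B : ℝ} (hB : 0 ≤ B) {N : ℕ}
    (hc : ∀ k, k ≤ N → ‖c k‖ ≤ B) : ∀ k, k ≤ N → ‖uS κ c k‖ ≤ 1 / 2 + k * (N * B) := by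
  intro k
  induction k with
  | zero => intro _; simp [uS]
  | succ k ih =>
    intro hk
    rw [uS_succ]
    have hn : ‖(k + 1 : ℂ)‖ = (k + 1 : ℝ) := by
      have := Complex.norm_natCast (k + 1); push_cast at this; exact this
    have hkN : (k + 1 : ℝ) ≤ N := by exact_mod_cast hk
    refine (norm_add_le _ _).trans ?_
    rw [norm_mul, norm_mul, hκ, one_mul, hn]
    have := mul_le_mul hkN (hc (k + 1) hk) (norm_nonneg _) (Nat.cast_nonneg N)
    have := ih (by omega)
    push_cast; linarith

lemma eS_bound {κ : ℂ} (hκ : ‖κ‖ = 1) {c : ℕ → ℂ} {B : ℝ} (hB : 0 ≤ B) {N : ℕ}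
    (hc : ∀ k, k ≤ N → ‖c k‖ ≤ B) {k : ℕ} (hk : k < N) : ‖eS κ c k‖ ≤ 1 + 2 * (N * (N * B)) := by
  have h1 := uS_bound hκ hB hc (k + 1) hk
  have h2 := uS_bound hκ hB hc k hk.le
  have hkN : (k + 1 : ℝ) ≤ N := by exact_mod_cast hk
  have h3 : (k + 1 : ℝ) * (N * B) ≤ N * (N * B) := mul_le_mul_of_nonneg_right hkN (by positivity)
  have h4 : 0 ≤ N * B := by positivity
  push_cast at h1
  refine (norm_add_le _ _).trans ?_
  rw [norm_mul, hκ, one_mul]; linarith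

/-- The velocities `e_j` vanish exactly when `k c_k = (-κ)^k`; this is the quantitative version. -/
lemma x_approx {κ : ℂ} (hκ : ‖κ‖ = 1) (c : ℕ → ℂ) (k : ℕ) :
    ‖(k + 1 : ℂ) * c (k + 1) - (-κ) ^ (k + 1)‖ ≤
      2 * ∑ j ∈ Finset.range (k + 1), ‖eS κ c j‖ - ‖eS κ c k‖ := by
  induction k with
  | zero =>
    have : ((0:ℕ) + 1 : ℂ) * c (0 + 1) - (-κ) ^ (0 + 1) = eS κ c 0 := by
      simp [eS, uS]; ring
    rw [this]; simp; linarith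
  | succ k ih =>
    have e : ((k + 1 : ℕ) + 1 : ℂ) * c (k + 1 + 1) - (-κ) ^ (k + 1 + 1) =
       (-κ) * ((k + 1 : ℂ) * c (k + 1) - (-κ) ^ (k + 1)) + (eS κ c (k + 1) - κ * eS κ c k) := by
      rw [eS, eS, uS_succ κ c (k + 1), uS_succ κ c k]; push_cast; ring
    rw [e, Finset.sum_range_succ]
    calc _ ≤ ‖(-κ) * ((k + 1 : ℂ) * c (k + 1) - (-κ) ^ (k + 1))‖ + (‖eS κ c (k + 1)‖ + ‖κ * eS κ c k‖) :=
          (norm_add_le _ _).trans (add_le_add_right (norm_sub_le _ _) _)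
      _ ≤ _ := by
          rw [norm_mul, norm_mul, norm_neg, hκ, one_mul, one_mul]
          linarith

lemma eS_zero (κ : ℂ) (c : ℕ → ℂ) : eS κ c 0 = c 1 + κ := by simp [eS, uS]; ring

/-- The penalty quantity is controlled by the velocities `e_j`. -/
lemma Q_bound {κ : ℂ} (hκ : ‖κ‖ = 1) (c : ℕ → ℂ) {K : ℕ} (hK : 1 ≤ K) (h1 : ‖c 1‖ ≤ 2) :
    ‖(K : ℂ) * c K - c 1 ^ K‖ ≤ (K + 2 + K * 2 ^ K) * ∑ j ∈ Finset.range K, ‖eS κ c j‖ := by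
  obtain ⟨k, rfl⟩ : ∃ j, K = j + 1 := ⟨K - 1, by omega⟩
  have a := x_approx hκ c k
  have b := pow_sub_le (p := -κ) (q := c 1) (by rw [norm_neg, hκ]; norm_num) h1 (k + 1)
  have e0 : ‖-κ - c 1‖ = ‖eS κ c 0‖ := by rw [eS_zero, ← norm_neg]; congr 1; ring
  set S := ∑ j ∈ Finset.range (k + 1), ‖eS κ c j‖ with hS
  have h0 : ‖eS κ c 0‖ ≤ S :=
    Finset.single_le_sum (f := fun j => ‖eS κ c j‖) (fun _ _ => norm_nonneg _) (by simp)
  have hS0 : 0 ≤ S := (norm_nonneg _).trans h0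
  rw [e0] at b
  clear_value S
  have e : ((k + 1 : ℕ) : ℂ) * c (k + 1) - c 1 ^ (k + 1) =
    ((k + 1 : ℂ) * c (k + 1) - (-κ) ^ (k + 1)) + ((-κ) ^ (k + 1) - c 1 ^ (k + 1)) := by push_cast; ring
  rw [e]
  refine (norm_add_le _ _).trans ?_
  have : ((k + 1 : ℕ) : ℝ) * 2 ^ (k + 1) * ‖eS κ c 0‖ ≤ ((k + 1 : ℕ) : ℝ) * 2 ^ (k + 1) * S :=
    mul_le_mul_of_nonneg_left h0 (by positivity)
  have h3 : 0 ≤ ((k + 1 : ℕ) : ℝ) * S := by positivity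
  have := norm_nonneg (eS κ c k)
  linarith

/-- The change of the penalty quantity over one step. -/
lemma Q_diff {κ : ℂ} {c c' : ℕ → ℂ} {K : ℕ} (hK : 1 ≤ K) (h1 : ‖c 1‖ ≤ 2) (h1' : ‖c' 1‖ ≤ 2)
    {A h : ℝ} (hh : 0 ≤ h)
    (hc' : ∀ k < K, ‖c' (k + 1) - (c (k + 1) - h * eS κ c k)‖ ≤ A * h ^ 2) :
    ‖((K : ℂ) * c' K - c' 1 ^ K) - ((K : ℂ) * c K - c 1 ^ K)‖ ≤
      (K + 2 + K * 2 ^ K) * (h * (∑ j ∈ Finset.range K, ‖eS κ c j‖) + A * h ^ 2) := by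
  set S := ∑ j ∈ Finset.range K, ‖eS κ c j‖ with hS
  have hd : ∀ k < K, ‖c' (k + 1) - c (k + 1)‖ ≤ h * S + A * h ^ 2 := by
    intro k hk
    have h0 : ‖eS κ c k‖ ≤ S :=
      Finset.single_le_sum (f := fun j => ‖eS κ c j‖) (fun _ _ => norm_nonneg _) (by simpa using hk)
    have e : c' (k + 1) - c (k + 1) = -(h * eS κ c k) + (c' (k + 1) - (c (k + 1) - h * eS κ c k)) := by ring
    rw [e]
    refine (norm_add_le _ _).trans (add_le_add ?_ (hc' k hk))
    rw [norm_neg, norm_mul, Complex.norm_real, Real.norm_of_nonneg hh]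
    gcongr
  have a := hd (K - 1) (by omega)
  rw [Nat.sub_add_cancel hK] at a
  have b := hd 0 (by omega)
  have p := pow_sub_le h1' h1 K
  have e : ((K : ℂ) * c' K - c' 1 ^ K) - ((K : ℂ) * c K - c 1 ^ K) =
    (K : ℂ) * (c' K - c K) - (c' 1 ^ K - c 1 ^ K) := by ring
  rw [e]
  refine (norm_sub_le _ _).trans ?_
  rw [norm_mul, Complex.norm_natCast]
  have h3 : (K:ℝ) * ‖c' K - c K‖ ≤ K * (h * S + A * h ^ 2) := by gcongr
  have h4 : (K:ℝ) * 2 ^ K * ‖c' 1 - c 1‖ ≤ K * 2 ^ K * (h * S + A * h ^ 2) := by gcongr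
  have h5 : 0 ≤ h * S + A * h ^ 2 := (norm_nonneg _).trans b
  linarith

end

/-! ### Decrease of the energy along one step -/

section
open Filter Topology Set

lemma normsq_step (c e c' : ℂ) {A B G h : ℝ} (hA : 0 ≤ A) (hh : 0 ≤ h) (hh1 : h ≤ 1)
    (hc : ‖c‖ ≤ B) (he : ‖e‖ ≤ G) (hr : ‖c' - (c - h * e)‖ ≤ A * h ^ 2) :
    ‖c'‖ ^ 2 - ‖c‖ ^ 2 + 2 * h * (e * (starRingEnd ℂ) c).re ≤
      (G ^ 2 + 2 * A * (B + G) + A ^ 2) * h ^ 2 := by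
  have hB : 0 ≤ B := (norm_nonneg _).trans hc
  have hG : 0 ≤ G := (norm_nonneg _).trans he
  have e1 : ‖c - h * e‖ ^ 2 = ‖c‖ ^ 2 - 2 * h * (e * (starRingEnd ℂ) c).re + h ^ 2 * ‖e‖ ^ 2 := by
    simp only [← Complex.normSq_eq_norm_sq, Complex.normSq_apply]
    simp; ring
  have h1 : ‖c - h * e‖ ≤ B + G := by
    refine (norm_sub_le _ _).trans (add_le_add hc ?_)
    rw [norm_mul, Complex.norm_real, Real.norm_of_nonneg hh]
    nlinarith [norm_nonneg e]
  have h2 : ‖c'‖ ≤ ‖c - h * e‖ + A * h ^ 2 := by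
    have := norm_add_le (c - h * e) (c' - (c - h * e))
    rw [add_sub_cancel] at this; linarith
  have h3 : ‖c'‖ ^ 2 ≤ (‖c - h * e‖ + A * h ^ 2) ^ 2 := pow_le_pow_left₀ (norm_nonneg _) h2 2
  have h4 : A * h ^ 2 ≤ A := mul_le_of_le_one_right hA (pow_le_one₀ hh hh1)
  have h5 : 0 ≤ A * h ^ 2 := by positivity
  have h6 : (A * h ^ 2) ^ 2 ≤ A * (A * h ^ 2) := by nlinarith
  have h7 : ‖c - h * e‖ * (A * h ^ 2) ≤ (B + G) * (A * h ^ 2) := mul_le_mul_of_nonneg_right h1 h5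
  have h8 : h ^ 2 * ‖e‖ ^ 2 ≤ h ^ 2 * G ^ 2 := by gcongr
  nlinarith

lemma tau_le_one {t : ℝ} (ht : 0 ≤ t) (k : ℕ) : tau (k + 1) t ≤ 1 := by
  refine ((abs_le.1 (abs_tau_le ht (k + 1))).2).trans ?_
  rw [div_le_one (by positivity)]; push_cast; linarith [(Nat.cast_nonneg k : (0:ℝ) ≤ k)]

lemma term_step {N k : ℕ} (hk : k < N) {A B G h t : ℝ} (hA : 0 ≤ A) (hh : 0 ≤ h) (hh1 : h ≤ 1)
    (ht : 0 ≤ t) {c e c' : ℂ}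
    (hc : ‖c‖ ≤ B) (he : ‖e‖ ≤ G) (hr : ‖c' - (c - h * e)‖ ≤ A * h ^ 2) :
    tau (k + 1) t * ((k + 1 : ℝ) * ‖c'‖ ^ 2 - 1 / (k + 1 : ℝ)) ≤
      tau (k + 1) (t + h) * ((k + 1 : ℝ) * ‖c‖ ^ 2 - 1 / (k + 1 : ℝ))
      - h * (sig (k + 1) t * (((k + 1 : ℝ) * ‖c‖) ^ 2 - 1)
        + 2 * tau (k + 1) t * ((k + 1 : ℝ) * (e * (starRingEnd ℂ) c).re))
      + (N * (G ^ 2 + 2 * A * (B + G) + A ^ 2) + 2 * (N * (N + 1)) * (N * B ^ 2 + 1)) * h ^ 2 := by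
  have h1 := normsq_step c e c' hA hh hh1 hc he hr
  have h2 := abs_le.1 (tau_taylor ht hh (k + 1))
  have hB : 0 ≤ B := (norm_nonneg _).trans hc
  have hG : 0 ≤ G := (norm_nonneg _).trans he
  have t0 := tau_nonneg ht (k := k + 1) (by omega)
  have t1 := tau_le_one ht k
  push_cast at h2
  have hm : (k + 1 : ℝ) ≤ N := by exact_mod_cast hk
  have hm1 : (1 : ℝ) ≤ k + 1 := by linarith [(Nat.cast_nonneg k : (0:ℝ) ≤ k)]
  generalize hM : (k + 1 : ℝ) = m at *
  have hm0 : 0 < m := by linarith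
  set R := G ^ 2 + 2 * A * (B + G) + A ^ 2 with hR
  have hR0 : 0 ≤ R := by positivity
  have p1 : tau (k + 1) t * m * (‖c'‖ ^ 2 - ‖c‖ ^ 2 + 2 * h * (e * (starRingEnd ℂ) c).re) ≤ N * R * h ^ 2 := by
    have : tau (k + 1) t * m ≤ N := by nlinarith
    calc _ ≤ tau (k + 1) t * m * (R * h ^ 2) := mul_le_mul_of_nonneg_left h1 (by positivity)
      _ ≤ N * (R * h ^ 2) := mul_le_mul_of_nonneg_right this (by positivity)
      _ = _ := by ring
  have p2 : |(tau (k + 1) (t + h) - tau (k + 1) t - h * m * sig (k + 1) t) * (m * ‖c‖ ^ 2 - 1 / m)| ≤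
      2 * (N * (N + 1)) * (N * B ^ 2 + 1) * h ^ 2 := by
    rw [abs_mul]
    have a1 : |tau (k + 1) (t + h) - tau (k + 1) t - h * m * sig (k + 1) t| ≤ 2 * (N * (N + 1)) * h ^ 2 := by
      refine (abs_le.2 h2).trans ?_; gcongr
    have a2 : |m * ‖c‖ ^ 2 - 1 / m| ≤ N * B ^ 2 + 1 := by
      have q1 : m * ‖c‖ ^ 2 ≤ N * B ^ 2 := by gcongr
      have q2 : 1 / m ≤ 1 := by rw [div_le_one hm0]; exact hm1
      have q3 : 0 ≤ 1 / m := by positivity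
      have q4 : 0 ≤ m * ‖c‖ ^ 2 := by positivity
      rw [abs_le]; constructor <;> linarith
    calc _ ≤ 2 * (N * (N + 1)) * h ^ 2 * (N * B ^ 2 + 1) :=
          mul_le_mul a1 a2 (abs_nonneg _) (by positivity)
      _ = _ := by ring
  have p3 := (abs_le.1 p2).1
  have e3 : h * m * sig (k + 1) t * (m * ‖c‖ ^ 2 - 1 / m) = h * (sig (k + 1) t * ((m * ‖c‖) ^ 2 - 1)) := by
    field_simp
  clear_value R
  linarith [e3]

lemma main_step (N : ℕ) {A B : ℝ} (hA : 0 ≤ A) (hB : 0 ≤ B) : ∃ A' ≥ 0, ∀ (κ : ℂ) (c c' : ℕ → ℂ) (t h : ℝ),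
    ‖κ‖ = 1 → 0 ≤ t → 0 ≤ h → h ≤ 1 → (∀ k, k ≤ N → ‖c k‖ ≤ B) →
    (∀ k < N, ‖c' (k + 1) - (c (k + 1) - h * eS κ c k)‖ ≤ A * h ^ 2) →
    ∑ k ∈ Finset.range N, tau (k + 1) t * ((k + 1 : ℝ) * ‖c' (k + 1)‖ ^ 2 - 1 / (k + 1 : ℝ)) ≤
    ∑ k ∈ Finset.range N, tau (k + 1) (t + h) * ((k + 1 : ℝ) * ‖c (k + 1)‖ ^ 2 - 1 / (k + 1 : ℝ))
    - h * (∑ k ∈ Finset.range N, (-sig (k + 1) t) * ‖eS κ c k‖ ^ 2) + A' * h ^ 2 + h * (2 / (N + 2)) := by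
  set G := 1 + 2 * (N * (N * B)) with hG
  refine ⟨N * (N * (G ^ 2 + 2 * A * (B + G) + A ^ 2) + 2 * (N * (N + 1)) * (N * B ^ 2 + 1)), by positivity, ?_⟩
  intro κ c c' t h hκ ht hh hh1 hc hc'
  have h1 := Finset.sum_le_sum (s := Finset.range N) fun k hk =>
    term_step (Finset.mem_range.1 hk) hA hh hh1 ht (hc (k + 1) (Finset.mem_range.1 hk))
      (eS_bound hκ hB hc (Finset.mem_range.1 hk)) (hc' k (Finset.mem_range.1 hk))
  rw [Finset.sum_add_distrib, Finset.sum_sub_distrib, ← Finset.mul_sum, Finset.sum_const,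
    Finset.card_range, nsmul_eq_mul] at h1
  have h2 := mul_le_mul_of_nonneg_left (energy_ineq hκ c ht N) hh
  rw [← hG] at h1
  linarith

lemma rho_step (t h : ℝ) (hh : 0 ≤ h) : max 0 (1 - t) ≤ max 0 (1 - (t + h)) + h := by
  rcases le_total (1 - t) 0 with h1 | h1
  · rw [max_eq_left h1]; have := le_max_left 0 (1 - (t + h)); linarith
  · rw [max_eq_right h1]; have := le_max_right 0 (1 - (t + h)); linarith

/-- The growth of the penalty over one step, where `q` and `q'` are the old and new values of the
penalty quantity, `ρ` and `ρ'` the time factors and `S` the sum of the `|e_j|`. -/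
lemma absorb {q q' C S T A h ρ ρ' : ℝ} (hC : 0 ≤ C) (hS : 0 ≤ S) (hA : 0 ≤ A) (hh : 0 ≤ h)
    (hh1 : h ≤ 1) (hST : S ≤ T) (hq : 0 ≤ q) (hq' : 0 ≤ q') (hQ : q ≤ C * S)
    (n1 : q' ≤ q + C * (h * S + A * h ^ 2)) (r0 : 0 ≤ ρ) (r1 : ρ ≤ 1) (r2 : ρ ≤ ρ' + h) :
    ρ * q' ^ 2 ≤ ρ' * q ^ 2 + h * (3 * C ^ 2 * S ^ 2)
      + (2 * (C * T) * (C * A) + (C * (T + A)) ^ 2) * h ^ 2 := by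
  have hT : 0 ≤ T := hS.trans hST
  set d := C * (h * S + A * h ^ 2) with hd
  have d0 : 0 ≤ d := by positivity
  have n2 : q' ^ 2 ≤ q ^ 2 + 2 * (C * S) * d + d ^ 2 := by
    have a := pow_le_pow_left₀ hq' n1 2
    have b := mul_le_mul_of_nonneg_right hQ d0
    calc _ ≤ (q + d) ^ 2 := a
      _ = q ^ 2 + 2 * (q * d) + d ^ 2 := by ring
      _ ≤ q ^ 2 + 2 * (C * S * d) + d ^ 2 := by gcongr
      _ = _ := by ring
  have m1 : d ≤ C * (T + A) * h := by
    have k1 : A * h ^ 2 ≤ A * h := by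
      apply mul_le_mul_of_nonneg_left _ hA; nlinarith
    have k2 : h * S ≤ h * T := by gcongr
    calc d ≤ C * (h * T + A * h) := by rw [hd]; gcongr
      _ = _ := by ring
  have m2 : d ^ 2 ≤ (C * (T + A) * h) ^ 2 := pow_le_pow_left₀ d0 m1 2
  have m3 : 2 * (C * S) * (C * A) * h ^ 2 ≤ 2 * (C * T) * (C * A) * h ^ 2 := by gcongr
  have m4 : 2 * (C * S) * d = 2 * C ^ 2 * S ^ 2 * h + 2 * (C * S) * (C * A) * h ^ 2 := by
    rw [hd]; ring
  set A2 := 2 * (C * T) * (C * A) + (C * (T + A)) ^ 2 with hA2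
  have hA20 : 0 ≤ A2 := by positivity
  have n3 : q' ^ 2 ≤ q ^ 2 + (2 * C ^ 2 * S ^ 2 * h + A2 * h ^ 2) := by
    have : A2 * h ^ 2 = 2 * (C * T) * (C * A) * h ^ 2 + (C * (T + A) * h) ^ 2 := by rw [hA2]; ring
    linarith
  have n4 : q ^ 2 ≤ C ^ 2 * S ^ 2 := by
    rw [← mul_pow]; exact pow_le_pow_left₀ hq hQ 2
  have q0 : 0 ≤ 2 * C ^ 2 * S ^ 2 * h + A2 * h ^ 2 := by positivity
  clear_value A2
  calc _ ≤ ρ * (q ^ 2 + (2 * C ^ 2 * S ^ 2 * h + A2 * h ^ 2)) := mul_le_mul_of_nonneg_left n3 r0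
    _ = ρ * q ^ 2 + ρ * (2 * C ^ 2 * S ^ 2 * h + A2 * h ^ 2) := by ring
    _ ≤ (ρ' + h) * q ^ 2 + 1 * (2 * C ^ 2 * S ^ 2 * h + A2 * h ^ 2) := by gcongr
    _ = ρ' * q ^ 2 + (h * q ^ 2 + 2 * C ^ 2 * S ^ 2 * h + A2 * h ^ 2) := by ring
    _ ≤ ρ' * q ^ 2 + (h * (C ^ 2 * S ^ 2) + 2 * C ^ 2 * S ^ 2 * h + A2 * h ^ 2) := by gcongr
    _ = _ := by ring

/-- One Euler step `c' ≈ c - h e` of the Löwner flow decreases `Phi` up to `O(h²)` and the truncation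
error `2h / (N + 2)`. The penalty weight `η` depends only on `K`: the gain `∑ (-σ_k) |e_k|²`, with
`-σ_k` bounded below for `t ≤ 1` and `k ≤ K`, dominates the growth of the penalty. -/
lemma Phi_step {K : ℕ} (hK : 1 ≤ K) : ∃ η > 0, ∀ N, K ≤ N → ∀ A B : ℝ, 0 ≤ A → 0 ≤ B →
    ∃ A' ≥ 0, ∀ (κ : ℂ) (c c' : ℕ → ℂ) (t h : ℝ),
    ‖κ‖ = 1 → 0 ≤ t → 0 ≤ h → h ≤ 1 → (∀ k, k ≤ N → ‖c k‖ ≤ B) → ‖c 1‖ ≤ 2 → ‖c' 1‖ ≤ 2 →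
    (∀ k < N, ‖c' (k + 1) - (c (k + 1) - h * eS κ c k)‖ ≤ A * h ^ 2) →
    Phi K N η t c' ≤ Phi K N η (t + h) c + A' * h ^ 2 + h * (2 / (N + 2)) := by
  obtain ⟨ε, hε, hsig⟩ := sig_neg K
  set C : ℝ := K + 2 + K * 2 ^ K with hC
  have hC0 : 0 < C := by positivity
  have hK0 : (0:ℝ) < K := by exact_mod_cast hK
  refine ⟨ε / (3 * C ^ 2 * K), by positivity, ?_⟩
  intro N hKN A B hA hB
  obtain ⟨A1, hA1, hmain⟩ := main_step N hA hB
  set η := ε / (3 * C ^ 2 * K) with hη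
  have hη0 : 0 < η := by positivity
  set G := 1 + 2 * (N * (N * B)) with hG
  have hG0 : 0 ≤ G := by positivity
  set T : ℝ := K * G with hT
  set A2 : ℝ := 2 * (C * T) * (C * A) + (C * (T + A)) ^ 2 with hA2
  have hA20 : 0 ≤ A2 := by positivity
  refine ⟨A1 + η * A2, by positivity, ?_⟩
  intro κ c c' t h hκ ht hh hh1 hc h1 h1' hc'
  have hm := hmain κ c c' t h hκ ht hh hh1 hc hc'
  set S := ∑ j ∈ Finset.range K, ‖eS κ c j‖ with hS
  set E := ∑ k ∈ Finset.range N, (-sig (k + 1) t) * ‖eS κ c k‖ ^ 2 with hE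
  have hE0 : 0 ≤ E := Finset.sum_nonneg fun k _ => mul_nonneg
    (neg_nonneg.2 (sig_nonpos ht (by omega))) (sq_nonneg _)
  have hS0 : 0 ≤ S := Finset.sum_nonneg fun k _ => norm_nonneg _
  have hST : S ≤ T := by
    calc S ≤ ∑ j ∈ Finset.range K, G := Finset.sum_le_sum fun j hj =>
          eS_bound hκ hB hc ((Finset.mem_range.1 hj).trans_le hKN)
      _ = T := by simp [hT]
  have hQ := Q_bound hκ c hK h1
  have hD := Q_diff (κ := κ) hK h1 h1' hh fun k hk => hc' k (hk.trans_le hKN)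
  rw [← hS, ← hC] at hQ hD
  set Q := (K : ℂ) * c K - c 1 ^ K with hQd
  set Q' := (K : ℂ) * c' K - c' 1 ^ K with hQd'
  have key : η * (max 0 (1 - t) * ‖Q'‖ ^ 2) ≤
      η * (max 0 (1 - (t + h)) * ‖Q‖ ^ 2) + h * E + η * A2 * h ^ 2 := by
    rcases le_total 1 t with h1t | h1t
    · rw [max_eq_left (by linarith : 1 - t ≤ 0), max_eq_left (by linarith : 1 - (t + h) ≤ 0)]
      have : 0 ≤ h * E + η * A2 * h ^ 2 := by positivity
      linarith
    · have hSE : η * (3 * C ^ 2 * S ^ 2) ≤ E := by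
        have i1 : S ^ 2 ≤ K * ∑ j ∈ Finset.range K, ‖eS κ c j‖ ^ 2 := by
          have := sq_sum_le_card_mul_sum_sq (s := Finset.range K) (f := fun j => ‖eS κ c j‖)
          simpa using this
        have i2 : ε * ∑ j ∈ Finset.range K, ‖eS κ c j‖ ^ 2 ≤ E := by
          rw [Finset.mul_sum]
          calc _ ≤ ∑ k ∈ Finset.range K, (-sig (k + 1) t) * ‖eS κ c k‖ ^ 2 :=
                Finset.sum_le_sum fun j hj => mul_le_mul_of_nonneg_right
                  (by linarith [hsig t ht h1t (j + 1) (by omega) (Finset.mem_range.1 hj)]) (sq_nonneg _)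
            _ ≤ E := Finset.sum_le_sum_of_subset_of_nonneg (Finset.range_mono hKN)
                fun k _ _ => mul_nonneg (neg_nonneg.2 (sig_nonpos ht (by omega))) (sq_nonneg _)
        calc η * (3 * C ^ 2 * S ^ 2) ≤ η * (3 * C ^ 2 * (K * ∑ j ∈ Finset.range K, ‖eS κ c j‖ ^ 2)) := by gcongr
          _ = ε * ∑ j ∈ Finset.range K, ‖eS κ c j‖ ^ 2 := by rw [hη]; field_simp
          _ ≤ E := i2
      have n1 : ‖Q'‖ ≤ ‖Q‖ + C * (h * S + A * h ^ 2) := by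
        have := norm_add_le Q (Q' - Q)
        rw [add_sub_cancel] at this; linarith
      have n5 := absorb hC0.le hS0 hA hh hh1 hST (norm_nonneg Q) (norm_nonneg Q') hQ n1
        (le_max_left 0 (1 - t)) (max_le zero_le_one (by linarith)) (rho_step t h hh)
      rw [← hA2] at n5
      have n6 := mul_le_mul_of_nonneg_left n5 hη0.le
      have n7 := mul_le_mul_of_nonneg_left hSE hh
      linarith
  unfold Phi
  rw [← hQd, ← hQd']
  linarith

/-- Rotating the coefficients, `c_k ↦ l^k c_k`, leaves the energy unchanged. -/
lemma Phi_rot (K N : ℕ) (η t : ℝ) {l : ℂ} (hl : ‖l‖ = 1) (c : ℕ → ℂ) :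
    Phi K N η t (fun k => l ^ k * c k) = Phi K N η t c := by
  unfold Phi
  have e : (K : ℂ) * (l ^ K * c K) - (l ^ 1 * c 1) ^ K = l ^ K * ((K : ℂ) * c K - c 1 ^ K) := by
    rw [pow_one, mul_pow]; ring
  simp only [e, norm_mul, norm_pow, hl, one_pow, one_mul]

end

/-! ### Taylor coefficients -/

section
open Filter Topology Set

/-- The `k`-th Taylor coefficient of `F` at `0`. -/
noncomputable def cf (k : ℕ) (F : ℂ → ℂ) : ℂ := iteratedDeriv k F 0 / (k.factorial : ℂ)

lemma cf_zero (F : ℂ → ℂ) : cf 0 F = F 0 := by simp [cf]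

lemma cf_congr {F G : ℂ → ℂ} (h : F =ᶠ[𝓝 0] G) (k : ℕ) : cf k F = cf k G := by
  rw [cf, cf, h.iteratedDeriv_eq]

lemma cf_deriv (F : ℂ → ℂ) (k : ℕ) : cf k (deriv F) = (k + 1 : ℂ) * cf (k + 1) F := by
  rw [cf, cf, iteratedDeriv_succ', Nat.factorial_succ]
  have : (k.factorial : ℂ) ≠ 0 := by exact_mod_cast Nat.factorial_ne_zero k
  have h2 : (k + 1 : ℂ) ≠ 0 := by exact_mod_cast Nat.succ_ne_zero k
  push_cast; field_simp

lemma cf_succ (F : ℂ → ℂ) (k : ℕ) : cf (k + 1) F = cf k (deriv F) / (k + 1 : ℂ) := by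
  have h2 : (k + 1 : ℂ) ≠ 0 := by exact_mod_cast Nat.succ_ne_zero k
  rw [cf_deriv]; field_simp

lemma cf_add {F G : ℂ → ℂ} (hF : AnalyticAt ℂ F 0) (hG : AnalyticAt ℂ G 0) (k : ℕ) :
    cf k (fun z => F z + G z) = cf k F + cf k G := by
  rw [cf, iteratedDeriv_fun_add hF.contDiffAt hG.contDiffAt, add_div]; rfl

lemma cf_const_mul (a : ℂ) {F : ℂ → ℂ} (hF : AnalyticAt ℂ F 0) (k : ℕ) :
    cf k (fun z => a * F z) = a * cf k F := by
  rw [cf, iteratedDeriv_const_mul a hF.contDiffAt, mul_div_assoc]; rfl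

lemma cf_sub {F G : ℂ → ℂ} (hF : AnalyticAt ℂ F 0) (hG : AnalyticAt ℂ G 0) (k : ℕ) :
    cf k (fun z => F z - G z) = cf k F - cf k G := by
  have := iteratedDeriv_sub (n := k) hF.contDiffAt hG.contDiffAt
  rw [cf, cf, cf, ← sub_div, ← this]; rfl

lemma cf_const (a : ℂ) (k : ℕ) : cf (k + 1) (fun _ => a) = 0 := by
  rw [cf_succ]
  simp [cf]

lemma cf_mul_X (k : ℕ) : ∀ {F : ℂ → ℂ}, AnalyticAt ℂ F 0 → cf (k + 1) (fun z => z * F z) = cf k F := by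
  have hder : ∀ {F : ℂ → ℂ}, AnalyticAt ℂ F 0 →
      deriv (fun z => z * F z) =ᶠ[𝓝 0] fun z => F z + z * deriv F z := by
    intro F hF
    filter_upwards [hF.eventually_analyticAt] with z hz
    have := ((hasDerivAt_id z).mul hz.differentiableAt.hasDerivAt).deriv
    simp only [id, one_mul] at this
    exact this
  induction k with
  | zero =>
    intro F hF
    rw [cf_succ, cf_congr (hder hF), cf_zero, cf_zero]; simp
  | succ k ih =>
    intro F hF
    have h2 : (((k + 1 : ℕ) : ℂ) + 1) ≠ 0 := by exact_mod_cast Nat.succ_ne_zero (k + 1)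
    have hd := hF.deriv
    have hz : AnalyticAt ℂ (fun z => z * deriv F z) 0 := by fun_prop
    rw [cf_succ, cf_congr (hder hF), cf_add hF hz, ih hF.deriv, cf_deriv]
    field_simp; push_cast; ring

lemma cf_rot (l : ℂ) (k : ℕ) : ∀ {F : ℂ → ℂ}, AnalyticAt ℂ F 0 →
    cf k (fun z => F (l * z)) = l ^ k * cf k F := by
  induction k with
  | zero => intro F hF; simp [cf_zero]
  | succ k ih =>
    intro F hF
    have hcomp : AnalyticAt ℂ (fun z => deriv F (l * z)) 0 := by
      refine AnalyticAt.fun_comp (g := deriv F) (f := fun z => l * z) ?_ (by fun_prop)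
      simpa using hF.deriv
    have hder : deriv (fun z => F (l * z)) =ᶠ[𝓝 0] fun z => l * deriv F (l * z) := by
      have hc : Tendsto (fun z : ℂ => l * z) (𝓝 0) (𝓝 0) := by
        have : Continuous (fun z : ℂ => l * z) := by fun_prop
        simpa using this.tendsto 0
      filter_upwards [hc.eventually hF.eventually_analyticAt] with z hz
      have := (hz.differentiableAt.hasDerivAt.comp z ((hasDerivAt_id z).const_mul l)).deriv
      simp only [mul_one] at this
      rw [mul_comm l]; exact this
    rw [cf_succ, cf_congr hder, cf_const_mul l hcomp, ih hF.deriv, cf_deriv]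
    have h2 : (k + 1 : ℂ) ≠ 0 := by exact_mod_cast Nat.succ_ne_zero k
    field_simp; ring

lemma analyticAt_of_ball {F : ℂ → ℂ} {r : ℝ} (hr : 0 < r) (h : DifferentiableOn ℂ F (ball 0 r)) :
    AnalyticAt ℂ F 0 := h.analyticAt (isOpen_ball.mem_nhds (by simpa using hr))

lemma diffContOnCl_ball {F : ℂ → ℂ} {U : Set ℂ} (h : DifferentiableOn ℂ F U) {x : ℂ} {r : ℝ}
    (hr : closedBall x r ⊆ U) : DiffContOnCl ℂ F (ball x r) :=
  (h.mono (closure_ball_subset_closedBall.trans hr)).diffContOnCl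

lemma cf_bound {F : ℂ → ℂ} (h : DifferentiableOn ℂ F (ball 0 (1 / 2))) {M : ℝ}
    (hM : ∀ z : ℂ, ‖z‖ = 1 / 4 → ‖F z‖ ≤ M) (k : ℕ) : ‖cf k F‖ ≤ 4 ^ k * M := by
  have := Complex.norm_iteratedDeriv_le_of_forall_mem_sphere_norm_le (R := 1 / 4) (C := M) (f := F) (c := 0) k
    (by norm_num) (diffContOnCl_ball h (closedBall_subset_ball (by norm_num)))
    (fun z hz => hM z (by simpa using hz))
  rw [cf, norm_div, Complex.norm_natCast]
  have hf : (0:ℝ) < k.factorial := by exact_mod_cast Nat.factorial_pos k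
  rw [div_le_iff₀ hf]
  refine this.trans (le_of_eq ?_)
  rw [one_div, inv_pow]; field_simp

lemma cf_uS {κ : ℂ} {C : ℂ → ℂ} (hC : AnalyticAt ℂ C 0) (k : ℕ) :
    cf k (fun z => (z * deriv C z + 1 / 2) / (1 - κ * z)) = uS κ (fun k => cf k C) k := by
  set U : ℂ → ℂ := fun z => (z * deriv C z + 1 / 2) / (1 - κ * z) with hU
  have hCd := hC.deriv
  have hUa : AnalyticAt ℂ U 0 := by
    refine AnalyticAt.div (by fun_prop) (by fun_prop) (by simp)
  induction k with
  | zero => rw [cf_zero]; simp [hU, uS]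
  | succ k ih =>
    have h1 : (fun z => U z - κ * (z * U z)) =ᶠ[𝓝 0] fun z => z * deriv C z + 1 / 2 := by
      have hc : ∀ᶠ z : ℂ in 𝓝 0, 1 - κ * z ≠ 0 := by
        have : Continuous (fun z : ℂ => 1 - κ * z) := by fun_prop
        exact this.continuousAt.eventually_ne (by simp)
      filter_upwards [hc] with z hz
      have e : (z * deriv C z + 1 / 2) / (1 - κ * z) * (1 - κ * z) = z * deriv C z + 1 / 2 :=
        div_mul_cancel₀ _ hz
      simp only [hU]; linear_combination e
    have h2 := cf_congr h1 (k + 1)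
    have hzU : AnalyticAt ℂ (fun z => z * U z) 0 := by fun_prop
    rw [cf_sub hUa (by fun_prop), cf_const_mul κ hzU, cf_mul_X k hUa,
      cf_add (by fun_prop) (by fun_prop), cf_mul_X k hCd, cf_const, cf_deriv] at h2
    rw [uS_succ, ← ih]
    linear_combination h2

lemma cf_eS {κ : ℂ} {C : ℂ → ℂ} (hC : AnalyticAt ℂ C 0) (k : ℕ) :
    cf (k + 1) (fun z => (1 + κ * z) * ((z * deriv C z + 1 / 2) / (1 - κ * z)) - 1 / 2)
      = eS κ (fun k => cf k C) k := by
  have hCd := hC.deriv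
  rw [eS, ← cf_uS hC, ← cf_uS hC]
  set U : ℂ → ℂ := fun z => (z * deriv C z + 1 / 2) / (1 - κ * z) with hU
  have hUa : AnalyticAt ℂ U 0 := by
    refine AnalyticAt.div (by fun_prop) (by fun_prop) (by simp)
  have hzU : AnalyticAt ℂ (fun z => z * U z) 0 := by fun_prop
  rw [← cf_mul_X k hUa, ← cf_const_mul κ hzU, ← cf_add hUa (by fun_prop),
    ← sub_zero (cf _ (fun z => U z + _)), ← cf_const (1 / 2) k, ← cf_sub (by fun_prop) (by fun_prop)]
  congr 1; ext z; simp only [hU]; ring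

end

/-! ### First-order expansion of the Koebe-type map -/

section
open Filter Topology Set

lemma deriv_bound {C : ℂ → ℂ} {r s M : ℝ} (hd : DifferentiableOn ℂ C (ball 0 r))
    (hM : ∀ z ∈ ball (0:ℂ) r, ‖C z‖ ≤ M) (hs : s + 1 / 8 ≤ r) : ∀ z ∈ ball (0:ℂ) s, ‖deriv C z‖ ≤ 8 * M := by
  intro z hz
  have hsub : closedBall z (1 / 8) ⊆ ball (0:ℂ) r := by
    intro y hy
    rw [mem_ball_zero_iff] at hz ⊢
    rw [mem_closedBall, dist_eq_norm] at hy
    have := norm_add_le z (y - z); rw [add_sub_cancel] at this; linarith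
  have := Complex.norm_deriv_le_of_forall_mem_sphere_norm_le (by norm_num : (0:ℝ) < 1 / 8)
    (diffContOnCl_ball hd hsub) (fun y hy => hM y (hsub (sphere_subset_closedBall hy)))
  refine this.trans (le_of_eq ?_); ring

lemma taylor2 {C : ℂ → ℂ} {M : ℝ} (hd : DifferentiableOn ℂ C (ball 0 (1 / 2)))
    (hM : ∀ z ∈ ball (0:ℂ) (1 / 2), ‖C z‖ ≤ M) {x z : ℂ} (hx : ‖x‖ ≤ ‖z‖) (hz : ‖z‖ = 1 / 4) :
    ‖C x - C z - deriv C z * (x - z)‖ ≤ 64 * M * ‖x - z‖ ^ 2 ∧ ‖deriv C z‖ ≤ 8 * M := by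
  have hM0 : 0 ≤ M := (norm_nonneg _).trans (hM 0 (by simp))
  have h1 := deriv_bound hd hM (s := 3 / 8) (by norm_num)
  have hd1 : DifferentiableOn ℂ (deriv C) (ball 0 (3 / 8)) :=
    (hd.deriv isOpen_ball).mono (ball_subset_ball (by norm_num))
  have hx4 : ‖x‖ ≤ 1 / 4 := by linarith
  have hseg : segment ℝ z x ⊆ closedBall (0:ℂ) (1 / 4) :=
    (convex_closedBall (0:ℂ) (1 / 4)).segment_subset (by simp [hz]) (by simpa using hx4)
  have hcb : closedBall (0:ℂ) (1 / 4) ⊆ ball 0 (3 / 8) := closedBall_subset_ball (by norm_num)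
  have hmem : ∀ y ∈ segment ℝ z x, ‖deriv (deriv C) y‖ ≤ 64 * M := by
    intro y hy
    have hy4 := hseg hy
    rw [mem_closedBall_zero_iff] at hy4
    have hsub' : closedBall y (1 / 8) ⊆ closedBall (0:ℂ) (3 / 8) := by
      intro u hu
      rw [mem_closedBall, dist_eq_norm] at hu
      rw [mem_closedBall_zero_iff]
      have := norm_add_le y (u - y); rw [add_sub_cancel] at this; linarith
    have hcl : ∀ u ∈ closedBall (0:ℂ) (3 / 8), ‖deriv C u‖ ≤ 8 * M := by
      intro u hu
      have hlim : ContinuousOn (fun v => ‖deriv C v‖) (ball (0:ℂ) (1 / 2)) :=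
        (hd.deriv isOpen_ball).continuousOn.norm
      have hu2 : u ∈ closure (ball (0:ℂ) (3 / 8)) := by
        rw [closure_ball _ (by norm_num)]; exact hu
      have hu3 : u ∈ ball (0:ℂ) (1 / 2) := closedBall_subset_ball (by norm_num) hu
      have := (hlim u hu3).continuousAt (isOpen_ball.mem_nhds hu3)
      have := this.continuousWithinAt (s := ball (0:ℂ) (3 / 8))
      exact this.closure_le hu2 continuousWithinAt_const h1
    have := Complex.norm_deriv_le_of_forall_mem_sphere_norm_le (by norm_num : (0:ℝ) < 1 / 8)
      (diffContOnCl_ball ((hd.deriv isOpen_ball)) (hsub'.trans (closedBall_subset_ball (by norm_num))))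
      (fun u hu => hcl u (hsub' (sphere_subset_closedBall hu)))
    refine this.trans (le_of_eq ?_); ring
  have hlen : ∀ y ∈ segment ℝ z x, ‖y - z‖ ≤ ‖x - z‖ := by
    intro y hy
    obtain ⟨θ, hθ, rfl⟩ := (segment_eq_image' ℝ z x) ▸ hy
    rw [add_sub_cancel_left, norm_smul, Real.norm_of_nonneg hθ.1]
    exact mul_le_of_le_one_left (norm_nonneg _) hθ.2
  have hlip : ∀ y ∈ segment ℝ z x, ‖deriv C y - deriv C z‖ ≤ 64 * M * ‖x - z‖ := by
    intro y hy
    have := (convex_segment z x).norm_image_sub_le_of_norm_hasDerivWithin_le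
      (f := deriv C) (f' := deriv (deriv C)) (C := 64 * M) (x := z) (y := y)
      (fun u hu => ((hd1.differentiableAt (isOpen_ball.mem_nhds (hcb (hseg hu)))).hasDerivAt).hasDerivWithinAt)
      hmem (left_mem_segment ℝ z x) hy
    exact this.trans (by gcongr; exact hlen y hy)
  constructor
  · have := (convex_segment z x).norm_image_sub_le_of_norm_hasDerivWithin_le
      (f := fun y => C y - deriv C z * y) (f' := fun y => deriv C y - deriv C z * 1)
      (C := 64 * M * ‖x - z‖) (x := z) (y := x)
      (fun u hu => (((hd.differentiableAt (isOpen_ball.mem_nhds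
        (closedBall_subset_ball (by norm_num) (hseg hu)))).hasDerivAt).sub
        ((hasDerivAt_id u).const_mul _)).hasDerivWithinAt)
      (fun u hu => by simpa using hlip u hu) (left_mem_segment ℝ z x) (right_mem_segment ℝ z x)
    calc _ = ‖C x - deriv C z * x - (C z - deriv C z * z)‖ := by congr 1; ring
      _ ≤ _ := this
      _ = _ := by ring
  · exact h1 z (by rw [mem_ball_zero_iff, hz]; norm_num)

lemma koebeF_norm_le {a : ℝ} (ha0 : 0 < a) (ha : a < 1) {κ z : ℂ} (hκ : ‖κ‖ = 1) (hz : ‖z‖ < 1) :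
    ‖koebeF a κ z‖ ≤ ‖z‖ := by
  have h := moebius_lt (v := κ * z) (d := a) (by rw [norm_mul, hκ, one_mul]; exact hz)
    (by rw [Complex.norm_real, Real.norm_of_nonneg ha0.le]; exact ha)
  rw [Complex.conj_ofReal, ← mul_assoc, norm_sub_rev] at h
  rw [koebeF, norm_div, norm_mul, mul_div_assoc]
  exact mul_le_of_le_one_right (norm_nonneg _) (div_le_one_of_le₀ h.le (norm_nonneg _))

lemma one_sub_ge {u : ℂ} {r : ℝ} (hu : ‖u‖ ≤ r) : 1 - r ≤ ‖1 - u‖ := by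
  have := norm_sub_norm_le (1:ℂ) u; rw [norm_one] at this; linarith

/-- The relative deviation in `koebeF a κ z = a z (1 + uF a κ z)`. -/
noncomputable def uF (a : ℝ) (κ z : ℂ) : ℂ := -(κ * z * (1 / a - a)) / (1 - a * κ * z)

lemma inv_sub_self_bound {h : ℝ} (h0 : 0 < h) (h1 : h ≤ 1 / 8) :
    ‖(1 / ((1 - h : ℝ) : ℂ) - ((1 - h : ℝ) : ℂ))‖ ≤ 16 / 7 * h := by
  have e : (1 / ((1 - h : ℝ) : ℂ) - ((1 - h : ℝ) : ℂ)) = ((1 / (1 - h) - (1 - h) : ℝ) : ℂ) := by push_cast; ring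
  have h2 : 0 < 1 - h := by linarith
  have e2 : 1 / (1 - h) - (1 - h) = h * (2 - h) / (1 - h) := by field_simp; ring
  rw [e, Complex.norm_real, e2, Real.norm_of_nonneg (by apply div_nonneg <;> nlinarith), div_le_iff₀ h2]
  nlinarith

lemma aκz_norm {h : ℝ} (h0 : 0 < h) (h1 : h ≤ 1 / 8) {κ z : ℂ} (hκ : ‖κ‖ = 1) {r : ℝ} (hz : ‖z‖ ≤ r) :
    ‖((1 - h : ℝ) : ℂ) * κ * z‖ ≤ r := by
  rw [norm_mul, norm_mul, hκ, mul_one, Complex.norm_real, Real.norm_of_nonneg (by linarith)]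
  nlinarith [norm_nonneg z]

lemma uF_bound {h : ℝ} (h0 : 0 < h) (h1 : h ≤ 1 / 8) {κ z : ℂ} (hκ : ‖κ‖ = 1) (hz : ‖z‖ ≤ 1 / 2) :
    ‖uF (1 - h) κ z‖ ≤ 16 / 7 * h := by
  have h3 := one_sub_ge (aκz_norm h0 h1 hκ hz)
  rw [uF, norm_div, norm_neg, norm_mul, norm_mul, hκ, one_mul, div_le_iff₀ (by linarith)]
  calc _ ≤ 1 / 2 * (16 / 7 * h) := mul_le_mul hz (inv_sub_self_bound h0 h1) (norm_nonneg _) (by norm_num)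
    _ ≤ _ := by nlinarith

lemma koebeF_eq {a : ℝ} (ha0 : 0 < a) {κ z : ℂ} (hne : 1 - a * κ * z ≠ 0) :
    koebeF a κ z = a * z * (1 + uF a κ z) := by
  have : (a : ℂ) ≠ 0 := by exact_mod_cast ha0.ne'
  rw [koebeF, uF]
  generalize hD : 1 - (a:ℂ) * κ * z = D at *
  field_simp
  rw [← hD]; ring

/-- First-order expansion in `h` of `½ log (1 + uF)`. -/
lemma ell_est {h : ℝ} (h0 : 0 < h) (h1 : h ≤ 1 / 8) {κ z : ℂ} (hκ : ‖κ‖ = 1) (hz : ‖z‖ = 1 / 4) :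
    ‖1 / 2 * Complex.log (1 + uF (1 - h) κ z) + h * (κ * z / (1 - κ * z))‖ ≤ 4 * h ^ 2 := by
  have hu := uF_bound h0 h1 hκ (by linarith : ‖z‖ ≤ 1 / 2)
  have hu1 : ‖uF (1 - h) κ z‖ ≤ 2 / 7 := by linarith
  have hl := Complex.norm_log_one_add_sub_self_le (z := uF (1 - h) κ z) (by linarith)
  have hinv : (1 - ‖uF (1 - h) κ z‖)⁻¹ ≤ 7 / 5 := by
    rw [inv_le_comm₀ (by linarith) (by norm_num)]; linarith
  have hl2 : ‖Complex.log (1 + uF (1 - h) κ z) - uF (1 - h) κ z‖ ≤ 4 * h ^ 2 := by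
    refine hl.trans ?_
    have : ‖uF (1 - h) κ z‖ ^ 2 * (1 - ‖uF (1 - h) κ z‖)⁻¹ ≤ (16 / 7 * h) ^ 2 * (7 / 5) := by
      apply mul_le_mul (pow_le_pow_left₀ (norm_nonneg _) hu 2) hinv (by rw [inv_nonneg]; linarith) (by positivity)
    nlinarith [sq_nonneg h]
  have n1 := one_sub_ge (aκz_norm h0 h1 hκ hz.le)
  have n2 : 1 - 1 / 4 ≤ ‖1 - κ * z‖ := one_sub_ge (by rw [norm_mul, hκ, one_mul, hz])
  have d1 : 1 - ((1 - h : ℝ) : ℂ) * κ * z ≠ 0 := by rw [← norm_pos_iff]; linarith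
  have d2 : 1 - κ * z ≠ 0 := by rw [← norm_pos_iff]; linarith
  have ha : (1 - h : ℂ) ≠ 0 := by
    have : (1 - h : ℝ) ≠ 0 := by linarith
    exact_mod_cast this
  have e : 1 / 2 * uF (1 - h) κ z + h * (κ * z / (1 - κ * z)) =
      h ^ 2 * (κ * z) * ((κ * z) / ((1 - κ * z) * (1 - ((1 - h : ℝ) : ℂ) * κ * z))
        - 1 / (2 * ((1 - h : ℝ) : ℂ)) / (1 - ((1 - h : ℝ) : ℂ) * κ * z)) := by
    rw [uF]; push_cast at d1 ⊢
    generalize hD : 1 - (1 - h : ℂ) * κ * z = D at *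
    generalize hE : 1 - κ * z = E at *
    field_simp
    rw [← hD, ← hE]; ring
  have hb : ‖1 / 2 * uF (1 - h) κ z + h * (κ * z / (1 - κ * z))‖ ≤ h ^ 2 := by
    rw [e, norm_mul, norm_mul, norm_mul, hκ, one_mul, hz, norm_pow, Complex.norm_real,
      Real.norm_of_nonneg h0.le]
    have q1 : ‖(κ * z) / ((1 - κ * z) * (1 - ((1 - h : ℝ) : ℂ) * κ * z))‖ ≤ 1 := by
      rw [norm_div, norm_mul, norm_mul, hκ, hz, div_le_one (by apply mul_pos <;> linarith)]
      nlinarith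
    have q2 : ‖1 / (2 * ((1 - h : ℝ) : ℂ)) / (1 - ((1 - h : ℝ) : ℂ) * κ * z)‖ ≤ 1 := by
      rw [norm_div, norm_div, norm_mul, norm_one, Complex.norm_real, Real.norm_of_nonneg (by linarith : 0 ≤ 1 - h),
        div_le_one (by linarith), div_le_iff₀ (by norm_num; linarith)]
      have : ‖(2:ℂ)‖ = 2 := by norm_num
      rw [this]; nlinarith
    have q3 := (norm_sub_le _ _).trans (add_le_add q1 q2)
    nlinarith [sq_nonneg h]
  have e3 : 1 / 2 * Complex.log (1 + uF (1 - h) κ z) + h * (κ * z / (1 - κ * z)) =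
    1 / 2 * (Complex.log (1 + uF (1 - h) κ z) - uF (1 - h) κ z) + (1 / 2 * uF (1 - h) κ z + h * (κ * z / (1 - κ * z))) := by ring
  rw [e3]
  refine (norm_add_le _ _).trans ?_
  rw [norm_mul]
  have : ‖(1 / 2 : ℂ)‖ = 1 / 2 := by norm_num
  rw [this]; linarith [sq_nonneg h]

/-- First-order expansion in `h` of the Koebe-type map; the main term is the Löwner vector field. -/
lemma F_est {h : ℝ} (h0 : 0 < h) (h1 : h ≤ 1 / 8) {κ z : ℂ} (hκ : ‖κ‖ = 1) (hz : ‖z‖ = 1 / 4) :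
    ‖koebeF (1 - h) κ z - z‖ ≤ h ∧
    ‖koebeF (1 - h) κ z - z + h * (z * ((1 + κ * z) / (1 - κ * z)))‖ ≤ h ^ 2 := by
  have n1 := one_sub_ge (aκz_norm h0 h1 hκ hz.le)
  have n2 : 1 - 1 / 4 ≤ ‖1 - κ * z‖ := one_sub_ge (by rw [norm_mul, hκ, one_mul, hz])
  have n3 : ‖1 + κ * z‖ ≤ 5 / 4 := by
    refine (norm_add_le _ _).trans ?_; rw [norm_one, norm_mul, hκ, hz]; norm_num
  have d1 : 1 - ((1 - h : ℝ) : ℂ) * κ * z ≠ 0 := by rw [← norm_pos_iff]; linarith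
  have d2 : 1 - κ * z ≠ 0 := by rw [← norm_pos_iff]; linarith
  constructor
  · have e : koebeF (1 - h) κ z - z = -(h * z * (1 + κ * z)) / (1 - ((1 - h : ℝ) : ℂ) * κ * z) := by
      rw [koebeF, eq_div_iff d1, sub_mul, div_mul_cancel₀ _ d1]; push_cast; ring
    rw [e, norm_div, norm_neg, norm_mul, norm_mul, hz, Complex.norm_real, Real.norm_of_nonneg h0.le,
      div_le_iff₀ (by linarith)]
    nlinarith
  · have e : koebeF (1 - h) κ z - z + h * (z * ((1 + κ * z) / (1 - κ * z))) =
       h ^ 2 * (z * (1 + κ * z) * (κ * z)) / ((1 - κ * z) * (1 - ((1 - h : ℝ) : ℂ) * κ * z)) := by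
      rw [koebeF, eq_div_iff (mul_ne_zero d2 d1)]; push_cast at d1 ⊢
      generalize hD : 1 - (1 - h : ℂ) * κ * z = D at *
      generalize hE : 1 - κ * z = E at *
      field_simp
      rw [← hD, ← hE]; ring
    rw [e, norm_div, norm_mul, norm_mul, norm_mul, norm_mul, norm_mul, hκ, hz, norm_pow, Complex.norm_real,
      Real.norm_of_nonneg h0.le, div_le_iff₀ (by apply mul_pos <;> linarith)]
    apply mul_le_mul_of_nonneg_left _ (sq_nonneg h)
    nlinarith

end

/-! ### One step of the chain on Taylor coefficients -/

section
open Filter Topology Set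

/-- Composing with one Koebe-type map replaces `C` by `C ∘ koebeF + ½ log (1 + uF)`, and the Taylor
coefficients move by `-h eS + O(h²)`. -/
lemma func_step {M h : ℝ} (h0 : 0 < h) (h1 : h ≤ 1 / 8) {κ : ℂ} (hκ : ‖κ‖ = 1) {C : ℂ → ℂ}
    (hd : DifferentiableOn ℂ C (ball 0 (1 / 2))) (hC0 : C 0 = 0)
    (hM : ∀ z ∈ ball (0:ℂ) (1 / 2), ‖C z‖ ≤ M) :
    ∃ C' : ℂ → ℂ, DifferentiableOn ℂ C' (ball 0 (1 / 2)) ∧ C' 0 = 0 ∧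
      (∀ z ∈ ball (0:ℂ) (1 / 2), ‖C' z‖ ≤ M + 3 * h) ∧
      (∀ z ∈ ball (0:ℂ) (1 / 2), koebeF (1 - h) κ z * Complex.exp (2 * C (koebeF (1 - h) κ z)) =
        ((1 - h : ℝ) : ℂ) * (z * Complex.exp (2 * C' z))) ∧
      ∀ k, ‖cf (k + 1) C' - (cf (k + 1) C - h * eS κ (fun k => cf k C) k)‖ ≤
        4 ^ (k + 1) * (72 * M + 4) * h ^ 2 := by
  have ha0 : 0 < 1 - h := by linarith
  have hM0 : 0 ≤ M := (norm_nonneg _).trans (hM 0 (by simp))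
  have hz2 : ∀ z ∈ ball (0:ℂ) (1 / 2), ‖z‖ < 1 / 2 := fun z hz => by simpa using hz
  have hden : ∀ z ∈ ball (0:ℂ) (1 / 2), 1 - ((1 - h : ℝ) : ℂ) * κ * z ≠ 0 := fun z hz => by
    have := one_sub_ge (aκz_norm h0 h1 hκ (hz2 z hz).le)
    rw [← norm_pos_iff]; linarith
  have hFm : ∀ z ∈ ball (0:ℂ) (1 / 2), koebeF (1 - h) κ z ∈ ball (0:ℂ) (1 / 2) := fun z hz => by
    have := koebeF_norm_le ha0 (by linarith) hκ (by linarith [hz2 z hz] : ‖z‖ < 1)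
    rw [mem_ball_zero_iff]; linarith [hz2 z hz]
  have hu : ∀ z ∈ ball (0:ℂ) (1 / 2), ‖uF (1 - h) κ z‖ ≤ 16 / 7 * h := fun z hz =>
    uF_bound h0 h1 hκ (hz2 z hz).le
  have hslit : ∀ z ∈ ball (0:ℂ) (1 / 2), 1 + uF (1 - h) κ z ∈ slitPlane := fun z hz =>
    mem_slitPlane_of_norm_lt_one (by linarith [hu z hz])
  have hud : DifferentiableOn ℂ (uF (1 - h) κ) (ball 0 (1 / 2)) := by
    unfold uF
    exact DifferentiableOn.div (by fun_prop) (by fun_prop) hden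
  have hFd : DifferentiableOn ℂ (koebeF (1 - h) κ) (ball 0 (1 / 2)) := by
    unfold koebeF
    exact DifferentiableOn.div (by fun_prop) (by fun_prop) hden
  set ℓ : ℂ → ℂ := fun z => 1 / 2 * Complex.log (1 + uF (1 - h) κ z) with hℓ
  have hℓd : DifferentiableOn ℂ ℓ (ball 0 (1 / 2)) :=
    ((hud.const_add 1).clog hslit).const_mul _
  have hcomp : DifferentiableOn ℂ (fun z => C (koebeF (1 - h) κ z)) (ball 0 (1 / 2)) :=
    hd.comp hFd hFm
  have hC'd : DifferentiableOn ℂ (fun z => C (koebeF (1 - h) κ z) + ℓ z) (ball 0 (1 / 2)) := hcomp.add hℓd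
  refine ⟨fun z => C (koebeF (1 - h) κ z) + ℓ z, hC'd, ?_, ?_, ?_, ?_⟩
  · simp [hℓ, koebeF, uF, hC0]
  · intro z hz
    refine (norm_add_le _ _).trans (add_le_add (hM _ (hFm z hz)) ?_)
    have := Complex.norm_log_one_add_half_le_self (z := uF (1 - h) κ z) (by linarith [hu z hz])
    simp only [hℓ, norm_mul]
    have h2 : ‖(1 / 2 : ℂ)‖ = 1 / 2 := by norm_num
    rw [h2]; linarith [hu z hz]
  · intro z hz
    have e : 2 * (C (koebeF (1 - h) κ z) + ℓ z) = 2 * C (koebeF (1 - h) κ z) + Complex.log (1 + uF (1 - h) κ z) := by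
      simp only [hℓ]; ring
    rw [e, Complex.exp_add, Complex.exp_log (slitPlane_ne_zero (hslit z hz))]
    nth_rw 1 [koebeF_eq ha0 (hden z hz)]; ring
  · intro k
    have hCa := analyticAt_of_ball (by norm_num) hd
    rw [← cf_eS hCa]
    set E : ℂ → ℂ := fun z => (1 + κ * z) * ((z * deriv C z + 1 / 2) / (1 - κ * z)) - 1 / 2 with hE
    have hden2 : ∀ z ∈ ball (0:ℂ) (1 / 2), 1 - κ * z ≠ 0 := fun z hz => by
      have := one_sub_ge (u := κ * z) (r := 1 / 2) (by rw [norm_mul, hκ, one_mul]; exact (hz2 z hz).le)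
      rw [← norm_pos_iff]; linarith
    have hdd : DifferentiableOn ℂ (deriv C) (ball 0 (1 / 2)) := hd.deriv isOpen_ball
    have hEd : DifferentiableOn ℂ E (ball 0 (1 / 2)) := by
      refine DifferentiableOn.sub_const (DifferentiableOn.mul (by fun_prop) ?_) _
      exact DifferentiableOn.div (by fun_prop) (by fun_prop) hden2
    have hEa := analyticAt_of_ball (by norm_num) hEd
    have hC'a := analyticAt_of_ball (by norm_num) hC'd
    have hhE : AnalyticAt ℂ (fun z => h * E z) 0 := by fun_prop
    rw [← cf_const_mul _ hEa, ← cf_sub hCa hhE, ← cf_sub hC'a (by fun_prop), mul_assoc]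
    refine cf_bound ?_ ?_ _
    · exact hC'd.sub (hd.sub (hEd.const_mul _))
    · intro z hz
      have hzb : z ∈ ball (0:ℂ) (1 / 2) := by rw [mem_ball_zero_iff, hz]; norm_num
      have hFn := koebeF_norm_le ha0 (by linarith) hκ (by rw [hz]; norm_num : ‖z‖ < 1)
      obtain ⟨t1, t2⟩ := taylor2 hd hM hFn hz
      obtain ⟨f1, f2⟩ := F_est h0 h1 hκ hz
      have l1 := ell_est h0 h1 hκ hz
      have d2 := hden2 z hzb
      have e : C (koebeF (1 - h) κ z) + ℓ z - (C z - h * E z) =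
        (C (koebeF (1 - h) κ z) - C z - deriv C z * (koebeF (1 - h) κ z - z)) +
        deriv C z * (koebeF (1 - h) κ z - z + h * (z * ((1 + κ * z) / (1 - κ * z)))) +
        (1 / 2 * Complex.log (1 + uF (1 - h) κ z) + h * (κ * z / (1 - κ * z))) := by
        simp only [hE, hℓ]; field_simp; ring
      rw [e]
      refine (norm_add₃_le).trans ?_
      rw [norm_mul]
      have g1 : 64 * M * ‖koebeF (1 - h) κ z - z‖ ^ 2 ≤ 64 * M * h ^ 2 := by gcongr
      have g2 : ‖deriv C z‖ * ‖koebeF (1 - h) κ z - z + h * (z * ((1 + κ * z) / (1 - κ * z)))‖ ≤ 8 * M * h ^ 2 :=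
        mul_le_mul t2 f2 (norm_nonneg _) (by positivity)
      linarith

end

/-! ### The discrete Löwner chain -/

section
open Filter Topology Set

/-- The state of the chain after `n` steps of size `h`: `w` is the remaining bounded univalent map and
`C` half the logarithm of the maps split off so far. The identity `rep` is kept only where
`|w| < 1/2`, the disk on which `C` is controlled. In `phi` the time `t` stays free, because each
further step uses the estimate at the shifted time `t + h`. -/
structure Inv (w₀ : ℂ → ℂ) (K N : ℕ) (η A A' h : ℝ) (n : ℕ) (w C : ℂ → ℂ) : Prop where
  wd : DifferentiableOn ℂ w (ball 0 1)
  wi : InjOn w (ball 0 1)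
  wm : MapsTo w (ball 0 1) (ball 0 1)
  w0 : w 0 = 0
  Cd : DifferentiableOn ℂ C (ball 0 (1 / 2))
  C0 : C 0 = 0
  Cb : ∀ z ∈ ball (0:ℂ) (1 / 2), ‖C z‖ ≤ 3 * (n * h)
  rep : ∀ z ∈ ball (0:ℂ) 1, ‖w z‖ < 1 / 2 →
    w₀ z = ((1 - h : ℝ) : ℂ) ^ n * (w z * Complex.exp (2 * C (w z)))
  c1 : ‖cf 1 C‖ ≤ 1 + n * (A * h ^ 2)
  phi : ∀ t, 0 ≤ t → Phi K N η t (fun k => cf k C) ≤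
    Phi K N η (t + n * h) (fun _ => 0) + n * (A' * h ^ 2 + h * (2 / (N + 2)))

lemma Inv.deriv_eq {w₀ : ℂ → ℂ} {K N : ℕ} {η A A' h : ℝ} {n : ℕ} {w C : ℂ → ℂ}
    (I : Inv w₀ K N η A A' h n w C) : deriv w₀ 0 = ((1 - h : ℝ) : ℂ) ^ n * deriv w 0 := by
  have hb : (0:ℂ) ∈ ball (0:ℂ) 1 := by simp
  have hw : HasDerivAt w (deriv w 0) 0 := (I.wd.differentiableAt (isOpen_ball.mem_nhds hb)).hasDerivAt
  have hC : HasDerivAt C (deriv C 0) (w 0) := by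
    rw [I.w0]
    exact (I.Cd.differentiableAt (isOpen_ball.mem_nhds (by simp))).hasDerivAt
  have h1 := (hw.mul (((hC.comp 0 hw).const_mul 2).cexp)).const_mul (((1 - h : ℝ) : ℂ) ^ n)
  have hev : w₀ =ᶠ[𝓝 0] fun z => ((1 - h : ℝ) : ℂ) ^ n * (w z * Complex.exp (2 * C (w z))) := by
    have : ∀ᶠ z in 𝓝 (0:ℂ), ‖w z‖ < 1 / 2 := by
      have := hw.continuousAt.norm
      refine this.eventually_lt continuousAt_const ?_
      simp [I.w0]
    filter_upwards [this, isOpen_ball.mem_nhds hb] with z h1 h2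
    exact I.rep z h2 h1
  rw [hev.deriv_eq]
  refine h1.deriv.trans ?_
  simp [I.w0, I.C0]

/-- The total time is bounded because `|w₀'(0)| = (1 - h)ⁿ |w'(0)| ≤ e^{-nh}`. -/
lemma Inv.time_le {w₀ : ℂ → ℂ} {K N : ℕ} {η A A' h : ℝ} {n : ℕ} {w C : ℂ → ℂ}
    (I : Inv w₀ K N η A A' h n w C) (h1 : h ≤ 1) (hd : deriv w₀ 0 ≠ 0) :
    n * h ≤ - Real.log ‖deriv w₀ 0‖ := by
  have hs : ‖deriv w 0‖ ≤ 1 := by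
    have := Complex.norm_deriv_le_div_of_mapsTo_ball (R₁ := 1) (R₂ := 1) (c := 0) (f := w) I.wd
      (by rw [I.w0]; exact fun z hz => ball_subset_closedBall (I.wm hz)) (by norm_num)
    simpa using this
  have e := congrArg norm I.deriv_eq
  rw [norm_mul, norm_pow, Complex.norm_real, Real.norm_of_nonneg (by linarith)] at e
  have h2 : (1 - h) ^ n ≤ Real.exp (-(n * h)) := by
    have := pow_le_pow_left₀ (by linarith) (Real.one_sub_le_exp_neg h) n
    rw [← Real.exp_nat_mul] at this
    rwa [mul_neg] at this
  have h3 : ‖deriv w₀ 0‖ ≤ Real.exp (-(n * h)) := by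
    rw [e]
    have : 0 ≤ (1 - h) ^ n := pow_nonneg (by linarith) n
    nlinarith
  have := Real.log_le_log (norm_pos_iff.2 hd) h3
  rw [Real.log_exp] at this; linarith

lemma cf_zero_fun (k : ℕ) : cf k (fun _ => 0) = 0 := by
  cases k with
  | zero => rw [cf_zero]
  | succ k => exact cf_const 0 k

lemma Inv.zero {w₀ : ℂ → ℂ} {K N : ℕ} {η A A' h : ℝ} (hd : DifferentiableOn ℂ w₀ (ball 0 1))
    (hi : InjOn w₀ (ball 0 1)) (hm : MapsTo w₀ (ball 0 1) (ball 0 1)) (h0 : w₀ 0 = 0) :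
    Inv w₀ K N η A A' h 0 w₀ (fun _ => 0) where
  wd := hd
  wi := hi
  wm := hm
  w0 := h0
  Cd := by fun_prop
  C0 := rfl
  Cb := by simp
  rep := by simp
  c1 := by rw [cf_zero_fun]; simp
  phi := by intro t _; simp [cf_zero_fun]

lemma koebeF_rot (a : ℝ) {l κ z : ℂ} (hl : l ≠ 0) : l * koebeF a κ z = koebeF a (κ / l) (l * z) := by
  have e : κ / l * (l * z) = κ * z := by field_simp
  rw [koebeF, koebeF, e, mul_assoc (a:ℂ) (κ / l), e]; ring

/-- One step of the chain, possible while `w` omits a value of modulus at most `ω²`. -/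
lemma Inv.step {w₀ : ℂ → ℂ} {K N : ℕ} {η A A' h S₀ : ℝ} {n : ℕ} {w C : ℂ → ℂ}
    (hKN : K ≤ N) (hK : 1 ≤ K) (hA : A = 4 ^ N * (72 * (3 * S₀) + 4))
    (hPhi : ∀ (κ : ℂ) (c c' : ℕ → ℂ) (t h : ℝ),
      ‖κ‖ = 1 → 0 ≤ t → 0 ≤ h → h ≤ 1 → (∀ k, k ≤ N → ‖c k‖ ≤ 4 ^ N * (3 * S₀)) → ‖c 1‖ ≤ 2 → ‖c' 1‖ ≤ 2 →
      (∀ k < N, ‖c' (k + 1) - (c (k + 1) - h * eS κ c k)‖ ≤ A * h ^ 2) →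
      Phi K N η t c' ≤ Phi K N η (t + h) c + A' * h ^ 2 + h * (2 / (N + 2)))
    (hn : n * h ≤ S₀) (hn1 : (n + 1) * (A * h ^ 2) ≤ 1)
    {ω : ℝ} (hω : 0 < ω) (hω1 : ω < 1) (hh : 1 - h = 2 * ω / (1 + ω ^ 2)) (hh0 : 0 < h) (hh8 : h ≤ 1 / 8)
    (I : Inv w₀ K N η A A' h n w C) {b : ℂ} (hb : ‖b‖ ≤ ω ^ 2)
    (hom : ∀ z ∈ ball (0:ℂ) 1, w z ≠ b) : ∃ w' C', Inv w₀ K N η A A' h (n + 1) w' C' := by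
  obtain ⟨b', hb', hom'⟩ := omit_on_circle I.wd I.wi (by positivity : 0 < ω ^ 2) hb hom
  obtain ⟨l, κ, v, hl, hκ, vd, vi, vm, v0, hv⟩ := koebe_step I.wd I.wi I.wm I.w0 hω hω1 hb' hom'
  rw [← hh] at hv
  have hl0 : l ≠ 0 := by rw [← norm_pos_iff, hl]; norm_num
  have hκ' : ‖κ / l‖ = 1 := by rw [norm_div, hκ, hl, div_one]
  obtain ⟨C', C'd, C'0, C'b, C'r, C'c⟩ := func_step hh0 hh8 hκ' I.Cd I.C0 I.Cb
  have hS0 : 0 ≤ S₀ := le_trans (by positivity) hn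
  have hA0 : 0 ≤ A := by rw [hA]; positivity
  have hest : ∀ k < N, ‖cf (k + 1) C' - (cf (k + 1) C - h * eS (κ / l) (fun k => cf k C) k)‖ ≤ A * h ^ 2 := by
    intro k hk
    refine (C'c k).trans ?_
    rw [hA]
    have : (4:ℝ) ^ (k + 1) ≤ 4 ^ N := pow_le_pow_right₀ (by norm_num) hk
    gcongr
  have hcb : ∀ k, k ≤ N → ‖cf k C‖ ≤ 4 ^ N * (3 * S₀) := by
    intro k hk
    refine (cf_bound (M := 3 * S₀) I.Cd (fun z hz => ?_) k).trans ?_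
    · exact (I.Cb z (by rw [mem_ball_zero_iff, hz]; norm_num)).trans (by linarith)
    · have : (4:ℝ) ^ k ≤ 4 ^ N := pow_le_pow_right₀ (by norm_num) hk
      gcongr
  have hc1' : ‖cf 1 C'‖ ≤ 1 + (n + 1) * (A * h ^ 2) := by
    have e0 := hest 0 (by omega)
    rw [eS_zero] at e0
    have e1 : cf 1 C' = (1 - h : ℝ) * cf 1 C - h * (κ / l)
        + (cf (0 + 1) C' - (cf (0 + 1) C - h * (cf 1 C + κ / l))) := by push_cast; ring
    rw [e1]
    refine (norm_add_le _ _).trans ?_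
    have e2 : ‖((1 - h : ℝ) : ℂ) * cf 1 C - h * (κ / l)‖ ≤ (1 - h) * (1 + n * (A * h ^ 2)) + h := by
      refine (norm_sub_le _ _).trans ?_
      rw [norm_mul, norm_mul, hκ', Complex.norm_real, Complex.norm_real, Real.norm_of_nonneg hh0.le,
        Real.norm_of_nonneg (by linarith : 0 ≤ 1 - h), mul_one]
      have := I.c1
      gcongr; linarith
    have e3 : 0 ≤ h * (n * (A * h ^ 2)) := by positivity
    have e4 : ‖cf (0 + 1) C' - (cf (0 + 1) C - h * (cf 1 C + κ / l))‖ ≤ A * h ^ 2 := e0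
    linarith
  refine ⟨fun z => l * v z, C', ?_⟩
  refine ⟨vd.const_mul l, ?_, ?_, ?_, C'd, C'0, ?_, ?_, ?_, ?_⟩
  · intro x hx y hy hxy
    exact vi hx hy (mul_left_cancel₀ hl0 hxy)
  · intro z hz
    have := vm hz
    rw [mem_ball_zero_iff] at this ⊢
    rw [norm_mul, hl, one_mul]; exact this
  · simp [v0]
  · intro z hz
    refine (C'b z hz).trans (le_of_eq ?_); push_cast; ring
  · intro z hz hlt
    have hw : w z = koebeF (1 - h) (κ / l) (l * v z) := by rw [hv z hz, koebeF_rot _ hl0]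
    have hlt' : ‖w z‖ < 1 / 2 := by
      rw [hw]
      exact (koebeF_norm_le (by linarith) (by linarith) hκ' (by linarith)).trans_lt hlt
    have := C'r (l * v z) (by rw [mem_ball_zero_iff]; exact hlt)
    rw [I.rep z hz hlt', hw, this, pow_succ]; ring
  · push_cast; exact hc1'
  · intro t ht
    have hAh : 0 ≤ A * h ^ 2 := by positivity
    have p1 := hPhi (κ / l) (fun k => cf k C) (fun k => cf k C') t h hκ' ht hh0.le (by linarith) hcb
      (I.c1.trans (by linarith)) (hc1'.trans (by linarith)) hest
    have p2 := I.phi (t + h) (by linarith)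
    have e : t + h + n * h = t + (n + 1 : ℕ) * h := by push_cast; ring
    rw [e] at p2
    push_cast at p2 ⊢
    linarith

/-- The chain is continued until `|w'(0)| ≥ ω²`. Before that, `w` omits a value of modulus at most `ω²`
by `deriv_ge_of_cover`, and `Inv.time_le` bounds the number of steps. -/
lemma chain_end {w₀ : ℂ → ℂ} {K N : ℕ} {η A A' h : ℝ}
    (hd : DifferentiableOn ℂ w₀ (ball 0 1))
    (hi : InjOn w₀ (ball 0 1)) (hm : MapsTo w₀ (ball 0 1) (ball 0 1)) (h0 : w₀ 0 = 0)
    (hder : deriv w₀ 0 ≠ 0) {S₀ : ℝ} (hS : S₀ = - Real.log ‖deriv w₀ 0‖)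
    (hKN : K ≤ N) (hK : 1 ≤ K) (hA : A = 4 ^ N * (72 * (3 * S₀) + 4))
    (hPhi : ∀ (κ : ℂ) (c c' : ℕ → ℂ) (t h : ℝ),
      ‖κ‖ = 1 → 0 ≤ t → 0 ≤ h → h ≤ 1 → (∀ k, k ≤ N → ‖c k‖ ≤ 4 ^ N * (3 * S₀)) → ‖c 1‖ ≤ 2 → ‖c' 1‖ ≤ 2 →
      (∀ k < N, ‖c' (k + 1) - (c (k + 1) - h * eS κ c k)‖ ≤ A * h ^ 2) →
      Phi K N η t c' ≤ Phi K N η (t + h) c + A' * h ^ 2 + h * (2 / (N + 2)))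
    {ω : ℝ} (hω : 0 < ω) (hω1 : ω < 1) (hh : 1 - h = 2 * ω / (1 + ω ^ 2)) (hh0 : 0 < h) (hh8 : h ≤ 1 / 8)
    (hsmall : (S₀ + 1) * A * h ≤ 1) :
    ∃ n w C, Inv w₀ K N η A A' h n w C ∧ n * h ≤ S₀ ∧ ω ^ 2 ≤ ‖deriv w 0‖ := by
  have htime : ∀ n w C, Inv w₀ K N η A A' h n w C → n * h ≤ S₀ := fun n w C I => by
    rw [hS]; exact I.time_le (by linarith) hder
  by_contra hcon
  push Not at hcon
  have hall : ∀ n, ∃ w C, Inv w₀ K N η A A' h n w C := by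
    intro n
    induction n with
    | zero => exact ⟨_, _, Inv.zero hd hi hm h0⟩
    | succ n ih =>
      obtain ⟨w, C, I⟩ := ih
      have hn := htime n w C I
      have hlt := hcon n w C I hn
      have hom : ∃ b : ℂ, ‖b‖ ≤ ω ^ 2 ∧ ∀ z ∈ ball (0:ℂ) 1, w z ≠ b := by
        by_contra hno
        push Not at hno
        exact absurd (deriv_ge_of_cover I.wd I.wi I.w0 (by positivity) hno) (not_le.2 hlt)
      obtain ⟨b, hb, hb'⟩ := hom
      have hS0 : 0 ≤ S₀ := le_trans (by positivity) hn
      have hA0 : 0 ≤ A := by rw [hA]; positivity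
      refine Inv.step hKN hK hA hPhi hn ?_ hω hω1 hh hh0 hh8 I hb hb'
      have : (n + 1) * h ≤ S₀ + 1 := by linarith
      calc (n + 1) * (A * h ^ 2) = ((n + 1) * h) * A * h := by ring
        _ ≤ (S₀ + 1) * A * h := by gcongr
        _ ≤ 1 := hsmall
  obtain ⟨n, hn⟩ := exists_nat_gt (S₀ / h)
  obtain ⟨w, C, I⟩ := hall n
  have := htime n w C I
  rw [div_lt_iff₀ hh0] at hn
  linarith

end

/-! ### End of the chain and passage to the limit -/

section
open Filter Topology Set

/-- A logarithm of a function close to one, normalised at `0`, is small. -/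
lemma log_small {E : ℂ → ℂ} {r δ : ℝ} (hr : 0 < r) (hd : DifferentiableOn ℂ E (ball 0 r)) (h0 : E 0 = 0)
    (hδ : δ ≤ 1 / 2) (hE : ∀ z ∈ ball (0:ℂ) r, ‖Complex.exp (E z) - 1‖ ≤ δ) :
    ∀ z ∈ ball (0:ℂ) r, ‖E z‖ ≤ 3 / 2 * δ := by
  have hsl : ∀ z ∈ ball (0:ℂ) r, Complex.exp (E z) ∈ slitPlane := fun z hz => by
    have := mem_slitPlane_of_norm_lt_one (z := Complex.exp (E z) - 1) (by linarith [hE z hz])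
    simpa using this
  set F : ℂ → ℂ := fun z => E z - Complex.log (Complex.exp (E z)) with hF
  have hFd : DifferentiableOn ℂ F (ball 0 r) := hd.sub (hd.cexp.clog hsl)
  have hexp : ∀ z ∈ ball (0:ℂ) r, Complex.exp (F z) = 1 := fun z hz => by
    rw [hF]; simp only
    rw [Complex.exp_sub, Complex.exp_log (Complex.exp_ne_zero _), div_self (Complex.exp_ne_zero _)]
  have hder : EqOn (deriv F) 0 (ball 0 r) := by
    intro z hz
    have h1 := ((hFd.differentiableAt (isOpen_ball.mem_nhds hz)).hasDerivAt).cexp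
    have h2 : HasDerivAt (fun z => Complex.exp (F z)) 0 z := by
      refine (hasDerivAt_const z (1:ℂ)).congr_of_eventuallyEq ?_
      filter_upwards [isOpen_ball.mem_nhds hz] with y hy using hexp y hy
    have := h1.unique h2
    simpa [Complex.exp_ne_zero] using this
  intro z hz
  have hc := isOpen_ball.is_const_of_deriv_eq_zero (convex_ball (0:ℂ) r).isPreconnected hFd hder hz
    (mem_ball_self hr)
  have hF0 : F 0 = 0 := by simp [hF, h0]
  rw [hF0] at hc
  have e : E z = Complex.log (1 + (Complex.exp (E z) - 1)) := by
    rw [add_sub_cancel]; exact sub_eq_zero.1 hc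
  rw [e]
  refine (Complex.norm_log_one_add_half_le_self ((hE z hz).trans hδ)).trans ?_
  gcongr; exact hE z hz

/-- By the Schwarz–Pick lemma for `w z / z`, a self-map of the disk fixing `0` whose derivative at `0`
has modulus close to one is close to linear. -/
lemma near_id {w : ℂ → ℂ} {β : ℝ} (wd : DifferentiableOn ℂ w (ball 0 1))
    (wm : MapsTo w (ball 0 1) (ball 0 1)) (w0 : w 0 = 0) (hβ : 0 < β) (hβ1 : β < 1)
    (hp : β ≤ ‖deriv w 0‖) {z : ℂ} (hz : ‖z‖ < 1 / 2) :
    ‖w z - deriv w 0 * z‖ ≤ (1 - β ^ 4) / β * ‖z‖ := by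
  set q := dslope w 0 with hq
  have qd : DifferentiableOn ℂ q (ball 0 1) :=
    (Complex.differentiableOn_dslope (isOpen_ball.mem_nhds (by simp))).2 wd
  have q0 : q 0 = deriv w 0 := dslope_same w 0
  have qb : ∀ z ∈ ball (0:ℂ) 1, ‖q z‖ ≤ 1 := fun y hy => by
    have := Complex.norm_dslope_le_div_of_mapsTo_ball (R₁ := 1) (R₂ := 1) (c := 0) (f := w) wd
      (by rw [w0]; exact fun z hz => ball_subset_closedBall (wm hz)) hy
    simpa using this
  have hwz : ∀ y, w y = y * q y := fun y => by
    have := sub_smul_dslope w 0 y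
    rw [w0] at this; simpa using this.symm
  set a : ℂ := β * q 0 with ha
  have hq1 : ∀ y ∈ ball (0:ℂ) 1, ‖(β:ℂ) * q y‖ < 1 := fun y hy => by
    rw [norm_mul, Complex.norm_real, Real.norm_of_nonneg hβ.le]
    nlinarith [qb y hy, norm_nonneg (q y)]
  have ha1 : ‖a‖ < 1 := hq1 0 (by simp)
  have haβ : β ^ 2 ≤ ‖a‖ := by
    rw [ha, norm_mul, Complex.norm_real, Real.norm_of_nonneg hβ.le, q0]; nlinarith
  clear_value a
  set T : ℂ → ℂ := fun y => (β * q y - a) / (1 - (starRingEnd ℂ) a * (β * q y)) with hT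
  have hlt : ∀ y ∈ ball (0:ℂ) 1, ‖β * q y - a‖ < ‖1 - (starRingEnd ℂ) a * (β * q y)‖ := fun y hy =>
    moebius_lt (hq1 y hy) ha1
  have hne : ∀ y ∈ ball (0:ℂ) 1, 1 - (starRingEnd ℂ) a * (β * q y) ≠ 0 := fun y hy => by
    rw [← norm_pos_iff]; exact (norm_nonneg _).trans_lt (hlt y hy)
  have hTd : DifferentiableOn ℂ T (ball 0 1) :=
    ((qd.const_mul _).sub_const _).div (((qd.const_mul _).const_mul _).const_sub _) hne
  have hT0 : T 0 = 0 := by simp [hT, ha]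
  have hTm : MapsTo T (ball 0 1) (closedBall 0 1) := fun y hy => by
    rw [mem_closedBall_zero_iff, hT]; simp only
    rw [norm_div]
    exact div_le_one_of_le₀ (hlt y hy).le (norm_nonneg _)
  have hz1 : z ∈ ball (0:ℂ) 1 := by rw [mem_ball_zero_iff]; linarith
  have hTz : ‖T z‖ ≤ ‖z‖ := by
    refine Complex.norm_le_norm_of_mapsTo_ball hTd hTm hT0 ?_
    simpa using hz1
  have h1 : ‖β * q z - a‖ ≤ ‖z‖ * ‖1 - (starRingEnd ℂ) a * (β * q z)‖ := by
    rw [hT] at hTz; simp only at hTz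
    rwa [norm_div, div_le_iff₀ (norm_pos_iff.2 (hne z hz1))] at hTz
  have h2 : ‖1 - (starRingEnd ℂ) a * (β * q z)‖ ≤ (1 - ‖a‖ ^ 2) + ‖β * q z - a‖ := by
    have e : 1 - (starRingEnd ℂ) a * (β * q z) = ((1 - ‖a‖ ^ 2 : ℝ) : ℂ) - (starRingEnd ℂ) a * (β * q z - a) := by
      push_cast; rw [mul_sub, Complex.conj_mul']; ring
    rw [e]
    refine (norm_sub_le _ _).trans ?_
    rw [norm_mul, Complex.norm_real, Real.norm_of_nonneg (by nlinarith [norm_nonneg a]), RCLike.norm_conj]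
    nlinarith [norm_nonneg (β * q z - a)]
  have h3 : ‖β * q z - a‖ ≤ 1 - β ^ 4 := by
    have : β ^ 4 ≤ ‖a‖ ^ 2 := by nlinarith [sq_nonneg β]
    nlinarith [norm_nonneg (β * q z - a), norm_nonneg (1 - (starRingEnd ℂ) a * (β * q z))]
  have h4 : ‖q z - q 0‖ ≤ (1 - β ^ 4) / β := by
    rw [le_div_iff₀ hβ]
    have e : (β:ℂ) * q z - a = (β:ℂ) * (q z - q 0) := by rw [ha]; ring
    rw [e, norm_mul, Complex.norm_real, Real.norm_of_nonneg hβ.le] at h3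
    linarith
  rw [hwz z, ← q0]
  have e : z * q z - q 0 * z = (q z - q 0) * z := by ring
  rw [e, norm_mul]
  gcongr

/-- At the end of the chain the coefficients of `C` agree, up to a rotation and a small error, with
those of `G`. -/
lemma end_est {w₀ : ℂ → ℂ} {K N : ℕ} {η A A' h : ℝ} {n : ℕ} {w C G : ℂ → ℂ} {S₀ β δ : ℝ}
    (I : Inv w₀ K N η A A' h n w C) (hder : deriv w₀ 0 ≠ 0) (hn : n * h ≤ S₀) (hS : 0 ≤ S₀)
    (Gd : DifferentiableOn ℂ G (ball 0 1)) (G0 : G 0 = 0)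
    (hG : ∀ z ∈ ball (0:ℂ) 1, w₀ z = deriv w₀ 0 * (z * Complex.exp (2 * G z)))
    (hβ : 0 < β) (hβ1 : β < 1) (hp : β ≤ ‖deriv w 0‖) (hδ : δ = (1 - β ^ 4) / β ^ 2) (hδ1 : δ ≤ 1 / 2) :
    ∃ l : ℂ, ‖l‖ = 1 ∧ ∀ k, ‖l ^ k * cf k C - cf k G‖ ≤
      4 ^ k * ((1 + 6 * S₀) * δ) + (1 - β ^ k) * (4 ^ k * (3 * S₀)) := by
  set p := deriv w 0 with hpdef
  have hβ4 : β ^ 4 ≤ 1 := pow_le_one₀ hβ.le hβ1.le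
  have hδ0 : 0 ≤ δ := by rw [hδ]; exact div_nonneg (by linarith) (by positivity)
  have hp0 : p ≠ 0 := by rw [← norm_pos_iff]; linarith
  have hp1 : ‖p‖ ≤ 1 := by
    have := Complex.norm_deriv_le_div_of_mapsTo_ball (R₁ := 1) (R₂ := 1) (c := 0) (f := w) I.wd
      (by rw [I.w0]; exact fun z hz => ball_subset_closedBall (I.wm hz)) (by norm_num)
    simpa using this
  have hwle : ∀ z : ℂ, ‖z‖ < 1 → ‖w z‖ ≤ ‖z‖ := fun z hz =>
    Complex.norm_le_norm_of_mapsTo_ball I.wd (fun z hz => ball_subset_closedBall (I.wm hz)) I.w0 hz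
  have hδβ : (1 - β ^ 4) / β = δ * β := by rw [hδ]; field_simp
  have hwp : ∀ z : ℂ, ‖z‖ < 1 / 2 → ‖w z - p * z‖ ≤ δ * β * ‖z‖ := fun z hz => by
    rw [← hδβ]; exact near_id I.wd I.wm I.w0 hβ hβ1 hp hz
  have hsub : ball (0:ℂ) (1 / 2) ⊆ ball 0 1 := ball_subset_ball (by norm_num)
  have hwm : MapsTo w (ball 0 (1 / 2)) (ball 0 (1 / 2)) := fun z hz => by
    rw [mem_ball_zero_iff] at hz ⊢
    exact (hwle z (by linarith)).trans_lt hz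
  have hCw : DifferentiableOn ℂ (fun z => C (w z)) (ball 0 (1 / 2)) := I.Cd.comp (I.wd.mono hsub) hwm
  have hEd : DifferentiableOn ℂ (fun z => 2 * G z - 2 * C (w z)) (ball 0 (1 / 2)) :=
    ((Gd.mono hsub).const_mul 2).sub (hCw.const_mul 2)
  have hE := log_small (by norm_num) hEd (by simp [G0, I.w0, I.C0]) hδ1 (by
    intro z hz
    rcases eq_or_ne z 0 with rfl | hz0
    · simpa [G0, I.w0, I.C0] using hδ0
    have hz' := mem_ball_zero_iff.1 hz
    have e1 := I.rep z (hsub hz) (mem_ball_zero_iff.1 (hwm hz))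
    rw [hG z (hsub hz), I.deriv_eq] at e1
    have hne : ((1 - h : ℝ) : ℂ) ^ n ≠ 0 := fun h0 => hder (by rw [I.deriv_eq, h0, zero_mul])
    rw [mul_assoc] at e1
    have e2 := mul_left_cancel₀ hne e1
    have hpz : p * z ≠ 0 := mul_ne_zero hp0 hz0
    have e3 : Complex.exp (2 * G z - 2 * C (w z)) - 1 = (w z - p * z) / (p * z) := by
      rw [Complex.exp_sub, eq_div_iff hpz, sub_mul, one_mul, div_mul_eq_mul_div, sub_left_inj,
        div_eq_iff (Complex.exp_ne_zero _), ← e2]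
      ring
    rw [e3, norm_div, div_le_iff₀ (norm_pos_iff.2 hpz), norm_mul, ← mul_assoc]
    refine (hwp z hz').trans ?_
    gcongr)
  have hM0 : 0 ≤ 3 * S₀ := by positivity
  have hCb : ∀ z ∈ ball (0:ℂ) (1 / 2), ‖C z‖ ≤ 3 * S₀ := fun z hz => (I.Cb z hz).trans (by linarith)
  have hCd := deriv_bound I.Cd hCb (s := 3 / 8) (by norm_num)
  have hpm : MapsTo (fun z => p * z) (ball 0 (1 / 2)) (ball 0 (1 / 2)) := fun z hz => by
    rw [mem_ball_zero_iff] at hz ⊢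
    rw [norm_mul]; nlinarith [norm_nonneg z]
  have hCp : DifferentiableOn ℂ (fun z => C (p * z)) (ball 0 (1 / 2)) :=
    I.Cd.comp (by fun_prop) hpm
  have hmain : ∀ z : ℂ, ‖z‖ = 1 / 4 → ‖C (p * z) - G z‖ ≤ (1 + 6 * S₀) * δ := by
    intro z hz
    have m1 := hE z (by rw [mem_ball_zero_iff, hz]; norm_num)
    have e1 : 2 * G z - 2 * C (w z) = 2 * (G z - C (w z)) := by ring
    rw [e1, norm_mul] at m1
    have m1' : ‖G z - C (w z)‖ ≤ 3 / 4 * δ := by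
      have : ‖(2:ℂ)‖ = 2 := by norm_num
      rw [this] at m1; linarith
    have hx : w z ∈ ball (0:ℂ) (3 / 8) := by
      rw [mem_ball_zero_iff]; have := hwle z (by rw [hz]; norm_num); linarith
    have hy : p * z ∈ ball (0:ℂ) (3 / 8) := by
      rw [mem_ball_zero_iff, norm_mul, hz]; linarith
    have m2 := (convex_ball (0:ℂ) (3 / 8)).norm_image_sub_le_of_norm_hasDerivWithin_le
      (f := C) (f' := deriv C) (C := 8 * (3 * S₀))
      (fun u hu => (I.Cd.differentiableAt (isOpen_ball.mem_nhds
        (ball_subset_ball (by norm_num) hu))).hasDerivAt.hasDerivWithinAt) hCd hx hy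
    have m3 := hwp z (by rw [hz]; norm_num)
    rw [norm_sub_rev] at m3
    have m4 : ‖p * z - w z‖ ≤ δ * (1 / 4) := by
      rw [hz] at m3; nlinarith
    have m5 : ‖C (p * z) - C (w z)‖ ≤ 6 * S₀ * δ := by
      refine m2.trans ?_
      calc 8 * (3 * S₀) * ‖p * z - w z‖ ≤ 8 * (3 * S₀) * (δ * (1 / 4)) := by gcongr
        _ = _ := by ring
    have e : C (p * z) - G z = (C (p * z) - C (w z)) - (G z - C (w z)) := by ring
    rw [e]
    refine (norm_sub_le _ _).trans ?_
    linarith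
  have hnp : 0 < ‖p‖ := norm_pos_iff.2 hp0
  refine ⟨p / ‖p‖, by rw [norm_div, Complex.norm_real, norm_norm, div_self hnp.ne'], fun k => ?_⟩
  have hCa : AnalyticAt ℂ C 0 := analyticAt_of_ball (by norm_num) I.Cd
  have b1 := cf_bound (F := fun z => C (p * z) - G z) (hCp.sub (Gd.mono hsub)) hmain k
  have e1 : cf k (fun z => C (p * z) - G z) = p ^ k * cf k C - cf k G := by
    rw [← cf_rot p k hCa]
    exact cf_sub (analyticAt_of_ball (by norm_num) hCp) (analyticAt_of_ball (by norm_num) Gd) k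
  rw [e1] at b1
  have b2 := cf_bound I.Cd (fun z hz => hCb z (by rw [mem_ball_zero_iff, hz]; norm_num)) k
  have e2 : (p / ‖p‖) ^ k * cf k C - cf k G =
      (p ^ k * cf k C - cf k G) + ((1 - ‖p‖ ^ k : ℝ) : ℂ) * ((p / ‖p‖) ^ k * cf k C) := by
    have : (‖p‖ : ℂ) ≠ 0 := by exact_mod_cast hnp.ne'
    push_cast
    rw [div_pow]; field_simp; ring
  rw [e2]
  refine (norm_add_le _ _).trans (add_le_add b1 ?_)
  have hpk : ‖p‖ ^ k ≤ 1 := pow_le_one₀ hnp.le hp1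
  have hβk : β ^ k ≤ ‖p‖ ^ k := pow_le_pow_left₀ hβ.le hp k
  rw [norm_mul, norm_mul, norm_pow, norm_div, Complex.norm_real, Complex.norm_real, norm_norm,
    div_self hnp.ne', one_pow, one_mul, Real.norm_of_nonneg (by linarith)]
  gcongr
  linarith

lemma Phi_zero_le {K N : ℕ} {η t : ℝ} (hK : 1 ≤ K) (ht : 0 ≤ t) : Phi K N η t (fun _ => 0) ≤ 0 := by
  have hK0 : K ≠ 0 := by omega
  simp only [Phi, norm_zero, mul_zero, zero_pow hK0, sub_zero, ne_eq, OfNat.ofNat_ne_zero,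
    not_false_eq_true, zero_pow, add_zero, zero_sub]
  refine Finset.sum_nonpos fun k _ => ?_
  have h1 : 0 ≤ tau (k + 1) t := tau_nonneg ht (by omega)
  have h2 : 0 ≤ 1 / (k + 1 : ℝ) := by positivity
  nlinarith

lemma Phi_tendsto {K N : ℕ} {η t : ℝ} {F : Filter ℝ} {c : ℝ → ℕ → ℂ} {d : ℕ → ℂ}
    (h : ∀ k, Tendsto (fun x => c x k) F (𝓝 (d k))) :
    Tendsto (fun x => Phi K N η t (c x)) F (𝓝 (Phi K N η t d)) := by
  unfold Phi
  refine Tendsto.add (tendsto_finsetSum _ fun k _ => ?_) ?_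
  · exact ((((h (k + 1)).norm.pow 2).const_mul _).sub_const _).const_mul _
  · exact ((((((h K).const_mul _).sub ((h 1).pow K)).norm.pow 2).const_mul _)).const_mul _

/-- The energy bound at time zero for the logarithmic coefficients of a bounded univalent `w₀`, obtained
by letting the step size of the chain tend to zero (`ω → 1`). The right-hand side is the truncation
error accumulated over the total time `-log |w₀'(0)|`. -/
lemma main_bound {K : ℕ} (hK : 1 ≤ K) : ∃ η > 0, ∀ N, K ≤ N → ∀ w₀ G : ℂ → ℂ,
    DifferentiableOn ℂ w₀ (ball 0 1) → InjOn w₀ (ball 0 1) → MapsTo w₀ (ball 0 1) (ball 0 1) →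
    w₀ 0 = 0 → deriv w₀ 0 ≠ 0 → DifferentiableOn ℂ G (ball 0 1) → G 0 = 0 →
    (∀ z ∈ ball (0:ℂ) 1, w₀ z = deriv w₀ 0 * (z * Complex.exp (2 * G z))) →
    Phi K N η 0 (fun k => cf k G) ≤ - Real.log ‖deriv w₀ 0‖ * (2 / (N + 2)) := by
  obtain ⟨η, hη, hstep⟩ := Phi_step hK
  refine ⟨η, hη, fun N hKN w₀ G hd hi hm h0 hder Gd G0 hG => ?_⟩
  set S₀ := - Real.log ‖deriv w₀ 0‖ with hS
  have hS0 : 0 ≤ S₀ := by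
    have := (Inv.zero (K := K) (N := N) (η := η) (A := 0) (A' := 0) (h := 0) hd hi hm h0).time_le
      (by norm_num) hder
    rw [Nat.cast_zero, zero_mul] at this
    exact this
  set A : ℝ := 4 ^ N * (72 * (3 * S₀) + 4) with hA
  obtain ⟨A', hA', hPhi⟩ := hstep N hKN A (4 ^ N * (3 * S₀)) (by positivity) (by positivity)
  set H : ℝ → ℝ := fun ω => 1 - 2 * ω / (1 + ω ^ 2) with hH
  set δ : ℝ → ℝ := fun ω => (1 - (ω ^ 2) ^ 4) / (ω ^ 2) ^ 2 with hδ
  set E : ℕ → ℝ → ℝ := fun k ω => 4 ^ k * ((1 + 6 * S₀) * δ ω) + (1 - (ω ^ 2) ^ k) * (4 ^ k * (3 * S₀))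
    with hE
  have tH : Tendsto H (𝓝[<] 1) (𝓝 0) := by
    have : ContinuousAt H 1 := by
      refine continuousAt_const.sub (ContinuousAt.div (by fun_prop) (by fun_prop) (by norm_num))
    have e : H 1 = 0 := by simp [hH]; norm_num
    have := this.tendsto; rw [e] at this
    exact this.mono_left nhdsWithin_le_nhds
  have tδ : Tendsto δ (𝓝[<] 1) (𝓝 0) := by
    have : ContinuousAt δ 1 := ContinuousAt.div (by fun_prop) (by fun_prop) (by norm_num)
    have e : δ 1 = 0 := by simp [hδ]
    have := this.tendsto; rw [e] at this
    exact this.mono_left nhdsWithin_le_nhds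
  have tE : ∀ k, Tendsto (E k) (𝓝[<] 1) (𝓝 0) := fun k => by
    have t1 : Tendsto (fun ω : ℝ => (1 - (ω ^ 2) ^ k)) (𝓝[<] 1) (𝓝 0) := by
      have : ContinuousAt (fun ω : ℝ => (1 - (ω ^ 2) ^ k)) 1 := by fun_prop
      have := this.tendsto; simp only [one_pow, sub_self] at this
      exact this.mono_left nhdsWithin_le_nhds
    have := ((tδ.const_mul (1 + 6 * S₀)).const_mul (4 ^ k)).add (t1.mul_const (4 ^ k * (3 * S₀)))
    simpa using this
  have key : ∀ᶠ ω in 𝓝[<] (1:ℝ), ∃ c : ℕ → ℂ, (∀ k, ‖c k - cf k G‖ ≤ E k ω) ∧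
      Phi K N η 0 c ≤ S₀ * (A' * H ω + 2 / (N + 2)) := by
    have a1 : ∀ᶠ ω in 𝓝[<] (1:ℝ), 0 < ω :=
      nhdsWithin_le_nhds (lt_mem_nhds (by norm_num))
    have a2 : ∀ᶠ ω in 𝓝[<] (1:ℝ), ω < 1 := self_mem_nhdsWithin
    have a3 : ∀ᶠ ω in 𝓝[<] (1:ℝ), H ω ≤ 1 / 8 := tH.eventually (ge_mem_nhds (by norm_num))
    have a4 : ∀ᶠ ω in 𝓝[<] (1:ℝ), δ ω ≤ 1 / 2 := tδ.eventually (ge_mem_nhds (by norm_num))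
    have a5 : ∀ᶠ ω in 𝓝[<] (1:ℝ), (S₀ + 1) * A * H ω ≤ 1 := by
      have := tH.const_mul ((S₀ + 1) * A)
      rw [mul_zero] at this
      exact this.eventually (ge_mem_nhds (by norm_num))
    filter_upwards [a1, a2, a3, a4, a5] with ω hω hω1 hh8 hδ1 hsm
    have hh0 : 0 < H ω := by
      rw [hH]; simp only
      rw [sub_pos, div_lt_one (by positivity)]
      nlinarith [mul_pos (sub_pos.2 hω1) (sub_pos.2 hω1)]
    obtain ⟨n, w, C, I, hn, hp⟩ := chain_end hd hi hm h0 hder hS hKN hK hA hPhi hω hω1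
      (by rw [hH]; ring : 1 - H ω = 2 * ω / (1 + ω ^ 2)) hh0 hh8 hsm
    obtain ⟨l, hl, hlk⟩ := end_est I hder hn hS0 Gd G0 hG (by positivity) (by nlinarith) hp
      (show δ ω = _ from rfl) hδ1
    refine ⟨fun k => l ^ k * cf k C, hlk, ?_⟩
    rw [Phi_rot K N η 0 hl]
    have p := I.phi 0 le_rfl
    have p0 := Phi_zero_le (K := K) (N := N) (η := η) hK (by positivity : 0 ≤ 0 + n * H ω)
    calc _ ≤ n * (A' * H ω ^ 2 + H ω * (2 / (N + 2))) := by linarith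
      _ = (n * H ω) * (A' * H ω + 2 / (N + 2)) := by ring
      _ ≤ _ := by gcongr
  obtain ⟨c, hc⟩ := key.choice
  have tc : ∀ k, Tendsto (fun ω => c ω k) (𝓝[<] 1) (𝓝 (cf k G)) := fun k => by
    rw [tendsto_iff_norm_sub_tendsto_zero]
    refine squeeze_zero' (Eventually.of_forall fun _ => norm_nonneg _) ?_ (tE k)
    filter_upwards [hc] with ω h using h.1 k
  have t2 : Tendsto (fun ω => S₀ * (A' * H ω + 2 / (N + 2))) (𝓝[<] 1) (𝓝 (S₀ * (2 / (N + 2)))) := by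
    have := ((tH.const_mul A').add_const (2 / ((N:ℝ) + 2))).const_mul S₀
    simpa using this
  refine le_of_tendsto_of_tendsto (Phi_tendsto tc) t2 ?_
  filter_upwards [hc] with ω h using h.2

end

/-! ### The strengthened inequality and the equality case -/

section
open Filter Topology Set

lemma Phi_time_zero (K N : ℕ) (η : ℝ) (c : ℕ → ℂ) :
    Phi K N η 0 c = ∑ k ∈ Finset.range N, (((k : ℝ) + 1) ^ 2 / (((k : ℝ) + 1) + 1) ^ 2) * ‖c (k + 1)‖ ^ 2
      - ∑ k ∈ Finset.range N, 1 / ((k : ℝ) + 2) ^ 2 + η * ‖(K : ℂ) * c K - c 1 ^ K‖ ^ 2 := by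
  rw [Phi, ← Finset.sum_sub_distrib]
  congr 1
  · refine Finset.sum_congr rfl fun k _ => ?_
    rw [tau_zero]
    push_cast
    have h1 : (k : ℝ) + 1 ≠ 0 := by positivity
    have h2 : (k : ℝ) + 1 + 1 ≠ 0 := by positivity
    have h3 : (k : ℝ) + 2 = k + 1 + 1 := by ring
    rw [h3]
    field_simp
  · norm_num

lemma hasSum_target : HasSum (fun k : ℕ => 1 / ((k : ℝ) + 2) ^ 2) (Real.pi ^ 2 / 6 - 1) := by
  have := (hasSum_nat_add_iff' 2).2 hasSum_zeta_two
  simpa [Finset.sum_range_succ] using this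

/-- `main_bound` applied to `f (r z) / (M + 1)`, where `M` bounds `f` on the disk of radius `r`. -/
lemma scaled {K : ℕ} (hK : 1 ≤ K) : ∃ η > 0, ∀ (f : ℂ → ℂ) (γ : ℕ → ℂ), InClassS f → IsLogCoeffs f γ →
    ∀ r : ℝ, 0 < r → r < 1 → ∃ S : ℝ, ∀ N, K ≤ N →
      Phi K N η 0 (fun k => (r : ℂ) ^ k * γ k) ≤ S * (2 / (N + 2)) := by
  obtain ⟨η, hη, hmain⟩ := main_bound hK
  refine ⟨η, hη, ?_⟩
  rintro f γ ⟨fa, fi, f0, f1⟩ ⟨g, ga, g0, hg, hgc⟩ r hr hr1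
  have hsub : closedBall (0:ℂ) r ⊆ ball 0 1 := closedBall_subset_ball hr1
  obtain ⟨M, hM⟩ := (isCompact_closedBall (0:ℂ) r).exists_bound_of_continuousOn (fa.continuousOn.mono hsub)
  have hmap : ∀ z ∈ ball (0:ℂ) 1, (r:ℂ) * z ∈ closedBall (0:ℂ) r := fun z hz => by
    rw [mem_ball_zero_iff] at hz
    rw [mem_closedBall_zero_iff, norm_mul, Complex.norm_real, Real.norm_of_nonneg hr.le]
    nlinarith
  have hM0 : 0 ≤ M := (norm_nonneg _).trans (hM 0 (by simp [hr.le]))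
  have hm0 : 0 < M + 1 := by linarith
  have hmc : ((M + 1 : ℝ) : ℂ) ≠ 0 := by exact_mod_cast hm0.ne'
  have hrc : (r:ℂ) ≠ 0 := by exact_mod_cast hr.ne'
  have hm1 : MapsTo (fun z : ℂ => (r:ℂ) * z) (ball 0 1) (ball 0 1) := fun z hz => hsub (hmap z hz)
  set w₀ : ℂ → ℂ := fun z => f (r * z) / ((M + 1 : ℝ) : ℂ) with hw
  have hwd : DifferentiableOn ℂ w₀ (ball 0 1) :=
    (fa.differentiableOn.comp (by fun_prop) hm1).div_const _
  have hder : deriv w₀ 0 = r / ((M + 1 : ℝ) : ℂ) := by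
    have h1 : HasDerivAt f 1 ((r:ℂ) * 0) := by
      rw [mul_zero, ← f1]; exact (fa 0 (by simp)).differentiableAt.hasDerivAt
    have h2 : HasDerivAt (fun z : ℂ => (r:ℂ) * z) (r:ℂ) 0 := by
      simpa using (hasDerivAt_id (0:ℂ)).const_mul (r:ℂ)
    have := ((h1.comp (0:ℂ) h2).div_const ((M + 1 : ℝ) : ℂ)).deriv
    rw [one_mul] at this
    exact this
  set G : ℂ → ℂ := fun z => 1 / 2 * g (r * z) with hG
  have hgr : AnalyticAt ℂ (fun z : ℂ => g (r * z)) 0 :=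
    analyticAt_of_ball one_pos (ga.differentiableOn.comp (by fun_prop) hm1)
  have hGc : ∀ k, 1 ≤ k → cf k G = (r : ℂ) ^ k * γ k := fun k hk => by
    rw [hG, cf_const_mul _ hgr, cf_rot _ _ (ga 0 (by simp)), cf, hgc k hk]
    have : (k.factorial : ℂ) ≠ 0 := by exact_mod_cast k.factorial_ne_zero
    field_simp
  refine ⟨- Real.log ‖deriv w₀ 0‖, fun N hN => ?_⟩
  have key := hmain N hN w₀ G hwd ?_ ?_ (by simp [hw, f0]) (by rw [hder]; exact div_ne_zero hrc hmc)
    ((ga.differentiableOn.comp (by fun_prop) hm1).const_mul _) (by simp [hG, g0]) ?_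
  · refine le_of_eq_of_le ?_ key
    rw [Phi_time_zero, Phi_time_zero, hGc K hK, hGc 1 le_rfl]
    congr 2
    exact Finset.sum_congr rfl fun k _ => by rw [hGc (k + 1) (by omega)]
  · intro x hx y hy hxy
    have := fi (hm1 hx) (hm1 hy) ((div_left_inj' hmc).1 hxy)
    exact mul_left_cancel₀ hrc this
  · intro z hz
    rw [mem_ball_zero_iff, hw]; simp only
    rw [norm_div, Complex.norm_real, Real.norm_of_nonneg hm0.le, div_lt_one hm0]
    linarith [hM _ (hmap z hz)]
  · intro z hz
    rw [hder]
    rcases eq_or_ne z 0 with rfl | hz0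
    · simp [hw, f0]
    have e := hg _ (hm1 hz) (mul_ne_zero hrc hz0)
    have e2 : 2 * G z = g (r * z) := by rw [hG]; ring
    simp only at e
    rw [e2, e, hw]
    field_simp

/-- Roth's inequality for partial sums, strengthened by a penalty term; the latter decides the
equality case. -/
lemma strong_bound {K : ℕ} (hK : 1 ≤ K) : ∃ η > 0, ∀ (f : ℂ → ℂ) (γ : ℕ → ℂ), InClassS f → IsLogCoeffs f γ →
    ∀ n : ℕ, ∑ k ∈ Finset.range n, (((k : ℝ) + 1) ^ 2 / (((k : ℝ) + 1) + 1) ^ 2) * ‖γ (k + 1)‖ ^ 2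
      + η * ‖(K : ℂ) * γ K - γ 1 ^ K‖ ^ 2 ≤ Real.pi ^ 2 / 6 - 1 := by
  obtain ⟨η, hη, hsc⟩ := scaled hK
  refine ⟨η, hη, fun f γ hf hγ n => ?_⟩
  set X : (ℕ → ℂ) → ℝ := fun c =>
    ∑ k ∈ Finset.range n, (((k : ℝ) + 1) ^ 2 / (((k : ℝ) + 1) + 1) ^ 2) * ‖c (k + 1)‖ ^ 2
      + η * ‖(K : ℂ) * c K - c 1 ^ K‖ ^ 2 with hX
  have hr : ∀ r : ℝ, 0 < r → r < 1 → X (fun k => (r : ℂ) ^ k * γ k) ≤ Real.pi ^ 2 / 6 - 1 := by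
    intro r h0 h1
    obtain ⟨S, hS⟩ := hsc f γ hf hγ r h0 h1
    have t : Tendsto (fun N : ℕ => Real.pi ^ 2 / 6 - 1 + S * (2 / ((N : ℝ) + 2))) atTop
        (𝓝 (Real.pi ^ 2 / 6 - 1)) := by
      have h2 : Tendsto (fun N : ℕ => (2:ℝ) / ((N : ℝ) + 2)) atTop (𝓝 0) :=
        Tendsto.div_atTop tendsto_const_nhds (tendsto_natCast_atTop_atTop.atTop_add tendsto_const_nhds)
      simpa using (h2.const_mul S).const_add (Real.pi ^ 2 / 6 - 1)
    refine ge_of_tendsto t ?_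
    filter_upwards [eventually_ge_atTop (max n K)] with N hN
    have p := hS N (le_trans (le_max_right _ _) hN)
    rw [Phi_time_zero] at p
    have q1 : ∑ k ∈ Finset.range N, 1 / ((k : ℝ) + 2) ^ 2 ≤ Real.pi ^ 2 / 6 - 1 :=
      sum_le_hasSum _ (fun k _ => by positivity) hasSum_target
    have q2 := Finset.sum_le_sum_of_subset_of_nonneg
      (Finset.range_mono (le_trans (le_max_left n K) hN))
      (f := fun k : ℕ => (((k : ℝ) + 1) ^ 2 / (((k : ℝ) + 1) + 1) ^ 2) * ‖(r : ℂ) ^ (k + 1) * γ (k + 1)‖ ^ 2)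
      (fun k _ _ => by positivity)
    rw [hX]; simp only
    linarith
  have hc : Tendsto (fun r : ℝ => X (fun k => (r : ℂ) ^ k * γ k)) (𝓝[<] 1) (𝓝 (X γ)) := by
    have hcont : Continuous (fun r : ℝ => X (fun k => (r : ℂ) ^ k * γ k)) := by
      rw [hX]; fun_prop
    have := (hcont.tendsto 1).mono_left (nhdsWithin_le_nhds (s := Iio 1))
    simpa using this
  refine le_of_tendsto hc ?_
  have a1 : ∀ᶠ ω in 𝓝[<] (1:ℝ), 0 < ω := nhdsWithin_le_nhds (lt_mem_nhds (by norm_num))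
  have a2 : ∀ᶠ ω in 𝓝[<] (1:ℝ), ω < 1 := self_mem_nhdsWithin
  filter_upwards [a1, a2] with r h0 h1 using hr r h0 h1

/-- If `k γ_k = γ_1^k` then `log (f z / z) = -2 log (1 - γ_1 z)`. -/
lemma koebe_of_coeffs {f : ℂ → ℂ} {γ : ℕ → ℂ} (hf : InClassS f) (hγ : IsLogCoeffs f γ)
    (hn : ‖γ 1‖ = 1) (hc : ∀ k : ℕ, 1 ≤ k → (k : ℂ) * γ k = γ 1 ^ k) : IsKoebeRotation f := by
  obtain ⟨fa, fi, f0, f1⟩ := hf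
  obtain ⟨g, ga, g0, hg, hgc⟩ := hγ
  refine ⟨Complex.arg (γ 1), fun z hz => ?_⟩
  have ha : Complex.exp (Complex.arg (γ 1) * Complex.I) = γ 1 := by
    have := Complex.norm_mul_exp_arg_mul_I (γ 1)
    rwa [hn, Complex.ofReal_one, one_mul] at this
  simp only
  rw [ha]
  rcases eq_or_ne z 0 with rfl | hz0
  · simp [f0]
  have hz1 : ‖γ 1 * z‖ < 1 := by rw [norm_mul, hn, one_mul]; simpa using hz
  have s1 := Complex.hasSum_taylorSeries_on_ball ga.differentiableOn hz
  have s2 := (Complex.hasSum_taylorSeries_neg_log hz1).mul_left 2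
  have e : g z = 2 * -Complex.log (1 - γ 1 * z) := by
    refine s1.unique (s2.congr_fun ?_)
    intro k
    rcases Nat.eq_zero_or_pos k with rfl | hk
    · simp [g0]
    have hk0 : (k:ℂ) ≠ 0 := by exact_mod_cast hk.ne'
    have hkf : (k.factorial : ℂ) ≠ 0 := by exact_mod_cast k.factorial_ne_zero
    rw [hgc k hk, mul_pow, ← hc k hk]
    simp only [smul_eq_mul, sub_zero]
    field_simp
  have hne : 1 - γ 1 * z ≠ 0 := fun h => by
    rw [sub_eq_zero] at h; rw [← h] at hz1; simp at hz1
  have h1 := hg z hz hz0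
  rw [e, two_mul, Complex.exp_add, Complex.exp_neg, Complex.exp_log hne] at h1
  rw [eq_div_iff hz0] at h1
  rw [← h1]; field_simp

end

end Roth


theorem roth_inequality
    (f : ℂ → ℂ) (γ : ℕ → ℂ) (hf : InClassS f) (hγ : IsLogCoeffs f γ) :
    (∑' n : ℕ, (((n : ℝ) + 1) ^ 2 / (((n : ℝ) + 1) + 1) ^ 2) * ‖γ (n + 1)‖ ^ 2 ≤ Real.pi ^ 2 / 6 - 1) ∧
    (∑' n : ℕ, (((n : ℝ) + 1) ^ 2 / (((n : ℝ) + 1) + 1) ^ 2) * ‖γ (n + 1)‖ ^ 2 = Real.pi ^ 2 / 6 - 1 → IsKoebeRotation f) := by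
  set T : ℕ → ℝ := fun n => (((n : ℝ) + 1) ^ 2 / (((n : ℝ) + 1) + 1) ^ 2) * ‖γ (n + 1)‖ ^ 2 with hT
  have hT0 : ∀ n, 0 ≤ T n := fun n => by rw [hT]; positivity
  have hsum : Summable T := by
    obtain ⟨η, hη, h⟩ := Roth.strong_bound (le_refl 1)
    refine summable_of_sum_range_le (c := Real.pi ^ 2 / 6 - 1) hT0 fun n => ?_
    have : 0 ≤ η * ‖((1 : ℕ) : ℂ) * γ 1 - γ 1 ^ 1‖ ^ 2 := by positivity
    exact (le_add_of_nonneg_right this).trans (h f γ hf hγ n)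
  have hstrong : ∀ K : ℕ, 1 ≤ K → ∃ η > 0,
      ∑' n, T n ≤ Real.pi ^ 2 / 6 - 1 - η * ‖(K : ℂ) * γ K - γ 1 ^ K‖ ^ 2 := fun K hK => by
    obtain ⟨η, hη, h⟩ := Roth.strong_bound hK
    refine ⟨η, hη, hsum.tsum_le_of_sum_range_le fun n => ?_⟩
    linarith [h f γ hf hγ n]
  refine ⟨?_, fun heq => ?_⟩
  · obtain ⟨η, hη, h⟩ := hstrong 1 le_rfl
    have : 0 ≤ η * ‖((1 : ℕ) : ℂ) * γ 1 - γ 1 ^ 1‖ ^ 2 := by positivity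
    exact h.trans (sub_le_self _ this)
  have hc : ∀ k : ℕ, 1 ≤ k → (k : ℂ) * γ k = γ 1 ^ k := fun k hk => by
    obtain ⟨η, hη, h⟩ := hstrong k hk
    rw [heq] at h
    have h1 : ‖(k : ℂ) * γ k - γ 1 ^ k‖ ^ 2 ≤ 0 := by
      by_contra hcon
      push Not at hcon
      have := mul_pos hη hcon
      linarith
    have h2 : ‖(k : ℂ) * γ k - γ 1 ^ k‖ = 0 := by
      have := sq_nonneg ‖(k : ℂ) * γ k - γ 1 ^ k‖
      exact pow_eq_zero_iff (two_ne_zero) |>.1 (le_antisymm h1 this)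
    exact sub_eq_zero.1 (norm_eq_zero.1 h2)
  have hTe : ∀ n, T n = ‖γ 1‖ ^ (2 * (n + 1)) * (1 / ((n : ℝ) + 2) ^ 2) := fun n => by
    have := congrArg norm (hc (n + 1) (by omega))
    rw [norm_mul, norm_pow, Complex.norm_natCast] at this
    push_cast at this
    rw [mul_comm 2, pow_mul, ← this, hT]; simp only
    have h3 : (n : ℝ) + 2 = n + 1 + 1 := by ring
    rw [h3, mul_pow]; ring
  have htgt := Roth.hasSum_target
  refine Roth.koebe_of_coeffs hf hγ ?_ hc
  -- `T n` is `‖γ 1‖ ^ (2 (n + 1))` times the term of the series for `π² / 6 - 1`, so equal sums force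
  -- `‖γ 1‖ = 1`.
  rcases lt_trichotomy ‖γ 1‖ 1 with hlt | h | hgt
  · exfalso
    have hle : ∀ n, T n < 1 / ((n : ℝ) + 2) ^ 2 := fun n => by
      rw [hTe]
      exact mul_lt_of_lt_one_left (by positivity) (pow_lt_one₀ (norm_nonneg _) hlt (by omega))
    have := hsum.tsum_lt_tsum (fun n => (hle n).le) (hle 0) htgt.summable
    rw [heq, htgt.tsum_eq] at this
    exact lt_irrefl _ this
  · exact h
  · exfalso
    have hle : ∀ n : ℕ, 1 / ((n : ℝ) + 2) ^ 2 < T n := fun n => by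
      rw [hTe]
      exact lt_mul_of_one_lt_left (by positivity) (one_lt_pow₀ hgt (by omega))
    have := htgt.summable.tsum_lt_tsum (fun n => (hle n).le) (hle 0) hsum
    rw [heq, htgt.tsum_eq] at this
    exact lt_irrefl _ this
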